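/- arXiv:1712.03247 — 2 statements merged into one kernel-verified Lean document; each statement's English description precedes it below -/
import Mathlib

section
/- For every integer k ≥ 3 there exists a constant C > 0 (depending only on k) such that for every integer r ≥ 2 there exists N such that for all n ≥ N, the r-color size-Ramsey number of the tight path satisfies R̂(P^{(k)}_{n,k-1}, r) ≤ C · r^k · (n · log n)^{k/2}. -/
/-!
The host hypergraph is built from a sparse random digraph on `k` cyclically ordered parts, each a copy
of `Fin L × Fin s`: every vertex chooses one out-neighbour in each of the `L` groups of size `s` of the
next part, and the hyperedges are the vertex sets of the directed cycles going once around. With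
`ℓ ≈ log n`, `s ≈ √(n / ℓ)` and `L` of order `r * ℓ * s ≈ r * √(n log n)`, the expected number of
hyperedges is `L ^ k`, which is the required order of magnitude.

Two properties hold with probability so close to one that some choice satisfies both and still has at
least `L ^ k / 2` cycles (`card_dense_small`, `exists_many_cycles`):
* any two vertices have at most `6 * μ` common neighbours in the part between them, where `L = μ * s`,
  so that few edges pass through a vertex (`cycles_through_le`) and there are at most `6 * L ^ k` edges;
* there are no `m = ℓ * s ^ 2` disjoint pairs of vertices each having `K`, a large multiple of `ℓ`,
  common neighbours in one set of `q = O(n)` vertices.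

Both are first-moment estimates (`card_dense_le`): an adjacency has probability `1 / s`, and the `q`-set
has size `O(K * s ^ 2)`, so the expected number of common neighbours in it is a small multiple of `K`.

Given these, consider an `r`-colouring without a monochromatic tight path on `n` vertices
(`mono_tightPath`). The most popular colour has many more edges than `K` times the shadow, so it has a
subfamily in which each shadow set extends in at least `K` ways (`clean`). A depth-first search in
this subfamily (`dfs`) produces `k * m` disjoint `(k - 1)`-sets all of whose extensions lie in one set
of `q` vertices. By pigeonhole `m` of them miss the same part; their ends next to that part are pairs
with `K` common neighbours in a `q`-set, which is excluded (`no_dead_matching`).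
-/

open Finset

/-- The edge set of the `k`-uniform tight path on vertex set `{1, ..., n}`:
the edges are the intervals `{i, i+1, ..., i+k-1}` for `1 ≤ i ≤ n-k+1`. -/
def tightPathEdges (k n : ℕ) : Finset (Finset ℕ) :=
  (Finset.Icc 1 (n - k + 1)).image (fun i => Finset.Icc i (i + k - 1))

/-- `ArrowsTo H GV GE r` : every `r`-coloring of the edges of the hypergraph `H`
yields a monochromatic copy of the hypergraph with vertex set `GV` and edge set `GE`,
i.e. an injection of `GV` into the vertices mapping each edge of `GE` to an edge of `H`,
all image edges having a single common color. -/
def ArrowsTo (H : Finset (Finset ℕ)) (GV : Finset ℕ) (GE : Finset (Finset ℕ)) (r : ℕ) : Prop :=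
  ∀ χ : Finset ℕ → Fin r, ∃ f : ℕ → ℕ, Set.InjOn f ↑GV ∧
    ∃ c : Fin r, ∀ e ∈ GE, e.image f ∈ H ∧ χ (e.image f) = c

/-- The `r`-color size-Ramsey number of the `k`-uniform hypergraph with vertex set `GV`
and edge set `GE`: the minimum number of edges of a `k`-uniform hypergraph `H`
with `H → (G)_r`. -/
noncomputable def sizeRamsey (k : ℕ) (GV : Finset ℕ) (GE : Finset (Finset ℕ)) (r : ℕ) : ℕ :=
  sInf {m | ∃ H : Finset (Finset ℕ), (∀ e ∈ H, e.card = k) ∧ H.card = m ∧ ArrowsTo H GV GE r}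

/-! ### Tight paths by depth-first search -/

/-- The first `p` values `y 0, ..., y (p - 1)` are distinct and form a tight path in `F`: every `k`
consecutive ones make up a member of `F`. Values of `y` beyond `p` are irrelevant, and for `p < k`
there is no edge condition. -/
def IsTightPath {W : Type*} [DecidableEq W] (k : ℕ) (F : Finset (Finset W)) (y : ℕ → W) (p : ℕ) :
    Prop :=
  Set.InjOn y (Set.Iio p) ∧ ∀ i, i + k ≤ p → (Finset.Ico i (i + k)).image y ∈ F

lemma IsTightPath.mono {W : Type*} [DecidableEq W] {k : ℕ} {F : Finset (Finset W)} {y : ℕ → W}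
    {p p' : ℕ} (h : IsTightPath k F y p) (hp : p' ≤ p) : IsTightPath k F y p' :=
  ⟨h.1.mono (Set.Iio_subset_Iio hp), fun i hi => h.2 i (hi.trans hp)⟩

/-- A tight path avoiding a set `D` can be prolonged greedily until it is stuck: every edge of `F`
containing its last `k - 1` vertices has its remaining vertex in `D` or on the path. The process
stops because no tight path of `F` has `n` vertices. -/
lemma tightPath_extend {W : Type*} [DecidableEq W] {k n : ℕ} (hk : 1 ≤ k) {F : Finset (Finset W)}
    (hno : ∀ y, ¬ IsTightPath k F y n) (D : Finset W) (y : ℕ → W) (p : ℕ) (hkp : k ≤ p)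
    (hy : IsTightPath k F y p) (hD : Disjoint D ((range p).image y)) :
    ∃ (y' : ℕ → W) (p' : ℕ), k ≤ p' ∧ (range p).image y ⊆ (range p').image y' ∧
      IsTightPath k F y' p' ∧ Disjoint D ((range p').image y') ∧
      ∀ w, w ∉ (Ico (p' - (k - 1)) p').image y' →
        insert w ((Ico (p' - (k - 1)) p').image y') ∈ F → w ∈ D ∪ (range p').image y' := by
  have hpn : p < n := by
    by_contra! h
    exact hno y (hy.mono h)
  by_cases hst : ∀ w, w ∉ (Ico (p - (k - 1)) p).image y →
        insert w ((Ico (p - (k - 1)) p).image y) ∈ F → w ∈ D ∪ (range p).image y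
  · exact ⟨y, p, hkp, subset_rfl, hy, hD, hst⟩
  push Not at hst
  obtain ⟨w, -, hwF, hw⟩ := hst
  rw [mem_union, not_or] at hw
  obtain ⟨hwD, hwy⟩ := hw
  have hagree : ∀ s : Finset ℕ, (∀ i ∈ s, i < p) → s.image (Function.update y p w) = s.image y := by
    intro s hs
    apply image_congr
    intro i hi
    exact Function.update_of_ne (hs i hi).ne _ _
  have himg : (range (p + 1)).image (Function.update y p w) = insert w ((range p).image y) := by
    rw [range_add_one, image_insert, Function.update_self, hagree _ (fun i hi => mem_range.1 hi)]
  have hy' : IsTightPath k F (Function.update y p w) (p + 1) := by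
    constructor
    · have : Set.Iio (p + 1) = insert p (Set.Iio p) := by ext; simp
      rw [this, Set.injOn_insert (by simp)]
      constructor
      · apply hy.1.congr
        intro i hi
        exact (Function.update_of_ne (ne_of_lt hi) _ _).symm
      · rintro ⟨i, hi, h⟩
        rw [Function.update_self, Function.update_of_ne (ne_of_lt hi)] at h
        exact hwy (mem_image.2 ⟨i, mem_range.2 hi, h⟩)
    · intro i hi
      rcases Nat.lt_or_ge p (i + k) with h | h
      · have : Ico i (i + k) = insert p (Ico (p - (k - 1)) p) := by
          ext j; simp; omega
        rw [this, image_insert, Function.update_self, hagree _ (fun i hi => (mem_Ico.1 hi).2)]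
        exact hwF
      · rw [hagree _ (fun j hj => by have := (mem_Ico.1 hj).2; omega)]
        exact hy.2 i h
  obtain ⟨y', p', h1, h2, h3⟩ := tightPath_extend hk hno D (Function.update y p w) (p + 1)
    (by omega) hy' (by rw [himg, disjoint_insert_right]; exact ⟨hwD, hD⟩)
  refine ⟨y', p', h1, (subset_insert _ _).trans (himg ▸ h2), h3⟩
termination_by n - p

lemma exists_enum {W : Type*} [DecidableEq W] {k : ℕ} (hk : 1 ≤ k) (e : Finset W)
    (he : e.card = k) : ∃ y : ℕ → W, Set.InjOn y (Set.Iio k) ∧ (range k).image y = e := by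
  have hne : e.Nonempty := card_pos.1 (by omega)
  obtain ⟨w0, -⟩ := hne
  let f := e.equivFinOfCardEq he
  have hinj : Set.InjOn (fun i => if h : i < k then ((f.symm ⟨i, h⟩ : e) : W) else w0)
      (Set.Iio k) := by
    intro i hi j hj h
    simp only [Set.mem_Iio] at hi hj
    simpa [hi, hj, Subtype.coe_inj] using h
  refine ⟨_, hinj, ?_⟩
  apply eq_of_subset_of_card_le
  · intro w hw
    obtain ⟨i, hi, rfl⟩ := mem_image.1 hw
    simp [mem_range.1 hi]
  · rw [card_image_of_injOn (by simpa using hinj)]; simp [he]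

/-- Depth-first search. If `F` has no tight path on `n` vertices and no set of at most `q` vertices
meets all its edges, one can find a tight path, a set `D` of discarded vertices, and `m` disjoint
`(k - 1)`-sets `T ⊆ D` of the shadow that are dead: every edge of `F` containing `T` has its
remaining vertex in `D` or on the path. Each round prolongs the path until it is stuck and then
discards its last `k - 1` vertices; since the vertices of `D` and of the path together only ever
increase, dead sets stay dead. -/
lemma dfs {W : Type*} [DecidableEq W] {k n : ℕ} (hk : 1 < k) {F : Finset (Finset W)}
    (hF : ∀ e ∈ F, e.card = k)
    (hno : ∀ y, ¬ IsTightPath k F y n) (q : ℕ)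
    (hcov : ∀ Q : Finset W, Q.card ≤ q → ∃ e ∈ F, Disjoint Q e) (m : ℕ) (hm : 2 * k * m ≤ q) :
    ∃ (D : Finset W) (y : ℕ → W) (p : ℕ) (𝒯 : Finset (Finset W)),
      D.card ≤ 2 * k * m ∧ IsTightPath k F y p ∧ Disjoint D ((range p).image y) ∧
      𝒯.card = m ∧ (𝒯 : Set (Finset W)).PairwiseDisjoint id ∧
      ∀ T ∈ 𝒯, T ⊆ D ∧ T ∈ F.shadow ∧
        ∀ w, w ∉ T → insert w T ∈ F → w ∈ D ∪ (range p).image y := by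
  induction m with
  | zero =>
    obtain ⟨e, he, -⟩ := hcov ∅ (by simp)
    obtain ⟨w, -⟩ : e.Nonempty := card_pos.1 (by rw [hF e he]; omega)
    exact ⟨∅, fun _ => w, 0, ∅, by simp, ⟨by simp [Set.InjOn], fun i hi => by omega⟩, by simp,
      by simp, by simp, by simp⟩
  | succ m ih =>
    obtain ⟨D, y, p, 𝒯, hDc, hy, hDy, h𝒯, hpd, hT⟩ := ih (by nlinarith)
    -- Prolonging needs at least `k` vertices; a shorter path is discarded altogether and replaced by
    -- an edge that avoids everything visited so far.
    obtain ⟨D₁, y₁, p₁, hkp, hD₁, hy₁, hDy₁, hDD, hcv⟩ : ∃ (D₁ : Finset W) (y₁ : ℕ → W) (p₁ : ℕ),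
        k ≤ p₁ ∧ D₁.card ≤ 2 * k * m + k ∧ IsTightPath k F y₁ p₁ ∧
        Disjoint D₁ ((range p₁).image y₁) ∧ D ⊆ D₁ ∧
        D ∪ (range p).image y ⊆ D₁ ∪ (range p₁).image y₁ := by
      rcases Nat.lt_or_ge p k with h | h
      · have hc : (D ∪ (range p).image y).card ≤ 2 * k * m + k := by
          refine (card_union_le _ _).trans ?_
          have := card_image_le (s := range p) (f := y)
          rw [card_range] at this
          omega
        obtain ⟨e, he, hde⟩ := hcov (D ∪ (range p).image y) (by nlinarith)
        obtain ⟨y₁, hinj, himg⟩ := exists_enum hk.le e (hF e he)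
        refine ⟨_, y₁, k, le_rfl, hc, ⟨hinj, ?_⟩, by rwa [himg], subset_union_left,
          subset_union_left⟩
        intro i hi
        obtain rfl : i = 0 := by omega
        rw [zero_add, ← range_eq_Ico, himg]
        exact he
      · exact ⟨D, y, p, h, by omega, hy, hDy, subset_rfl, subset_rfl⟩
    obtain ⟨y₂, p₂, hkp₂, hsub, hy₂, hDy₂, hstuck⟩ :=
      tightPath_extend hk.le hno D₁ y₁ p₁ hkp hy₁ hDy₁
    set T := (Ico (p₂ - (k - 1)) p₂).image y₂ with hTdef
    have hTcard : T.card = k - 1 := by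
      rw [hTdef, card_image_of_injOn (hy₂.1.mono (by intro i; simp))]
      simp; omega
    have hTsub : T ⊆ (range p₂).image y₂ := by
      apply image_subset_image; intro i; simp
    have hsplit : (range p₂).image y₂ = T ∪ (range (p₂ - (k - 1))).image y₂ := by
      rw [hTdef, ← image_union]
      congr 1
      ext i; simp; omega
    have hdisj : Disjoint T ((range (p₂ - (k - 1))).image y₂) := by
      rw [disjoint_left]
      intro w hw hw'
      obtain ⟨i, hi, rfl⟩ := mem_image.1 hw
      obtain ⟨j, hj, hij⟩ := mem_image.1 hw'
      simp only [mem_Ico, mem_range] at hi hj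
      have := hy₂.1 (show j ∈ Set.Iio p₂ by simp; omega) (show i ∈ Set.Iio p₂ by simp; omega) hij
      omega
    have hTshadow : T ∈ F.shadow := by
      rw [mem_shadow_iff]
      refine ⟨_, hy₂.2 (p₂ - k) (by omega), y₂ (p₂ - k), mem_image_of_mem _ (by simp; omega), ?_⟩
      have : Ico (p₂ - k) (p₂ - k + k) = insert (p₂ - k) (Ico (p₂ - (k - 1)) p₂) := by
        ext i; simp; omega
      rw [this, image_insert, erase_insert]
      intro h
      obtain ⟨j, hj, hij⟩ := mem_image.1 h
      simp only [mem_Ico] at hj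
      have := hy₂.1 (show j ∈ Set.Iio p₂ by simp; omega)
        (show p₂ - k ∈ Set.Iio p₂ by simp; omega) hij
      omega
    have hTD : Disjoint D₁ T := hDy₂.mono_right hTsub
    have hTnew : T ∉ 𝒯 := by
      intro h
      have h1 := (hT T h).1.trans hDD
      have : T = ∅ := by
        rw [← disjoint_self_iff_empty]
        exact hTD.mono_left h1
      rw [this] at hTcard
      simp at hTcard; omega
    refine ⟨D₁ ∪ T, y₂, p₂ - (k - 1), insert T 𝒯, ?_, hy₂.mono (by omega), ?_, ?_, ?_, ?_⟩
    · refine (card_union_le _ _).trans ?_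
      rw [hTcard]
      have : 2 * k * (m + 1) = 2 * k * m + 2 * k := by ring
      omega
    · rw [disjoint_union_left]
      exact ⟨hDy₂.mono_right (by rw [hsplit]; exact subset_union_right), hdisj⟩
    · rw [card_insert_of_notMem hTnew, h𝒯]
    · rw [coe_insert]
      apply hpd.insert
      intro T' hT' _
      exact (hTD.mono_left ((hT T' hT').1.trans hDD)).symm
    · have hbig : D₁ ∪ (range p₂).image y₂ =
          D₁ ∪ T ∪ (range (p₂ - (k - 1))).image y₂ := by rw [hsplit, union_assoc]
      intro T' hT'
      rw [mem_insert] at hT'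
      rw [← hbig]
      rcases hT' with rfl | hT'
      · exact ⟨subset_union_right, hTshadow, hstuck⟩
      · obtain ⟨h1, h2, h3⟩ := hT T' hT'
        refine ⟨(h1.trans hDD).trans subset_union_left, h2, fun w hw hwF => ?_⟩
        exact union_subset_union_right hsub (hcv (h3 w hw hwF))

/-- Every `k`-uniform `F₀` has a subfamily `F`, at most `K * |∂F₀|` edges smaller, in which each
`(k - 1)`-set of the shadow has degree at least `K`. A maximiser of `|F| - K * |∂F|` works: removing
all edges on a shadow set of smaller degree would increase this quantity. -/
lemma clean {W : Type*} [DecidableEq W] [Fintype W] {k : ℕ} (F₀ : Finset (Finset W))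
    (hF₀ : ∀ e ∈ F₀, e.card = k) (K : ℕ) :
    ∃ F ⊆ F₀, F₀.card ≤ F.card + K * F₀.shadow.card ∧
      ∀ T ∈ F.shadow, K ≤ (univ.filter fun w => w ∉ T ∧ insert w T ∈ F).card := by
  obtain ⟨F, hF, hmax⟩ := exists_max_image F₀.powerset
    (fun F => (F.card : ℤ) - K * F.shadow.card) ⟨∅, by simp⟩
  rw [mem_powerset] at hF
  refine ⟨F, hF, ?_, ?_⟩
  · have h := hmax F₀ (by simp)
    have : (0 : ℤ) ≤ K * F.shadow.card := by positivity
    zify; linarith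
  · intro T hT
    by_contra! hlt
    have h := hmax (F.filter fun e => ¬ T ⊆ e) (mem_powerset.2 ((filter_subset _ _).trans hF))
    have hs : (F.filter fun e => ¬ T ⊆ e).shadow.card + 1 ≤ F.shadow.card := by
      rw [Nat.succ_le_iff]
      apply card_lt_card
      rw [ssubset_iff_of_subset (shadow_monotone (filter_subset _ _))]
      refine ⟨T, hT, fun h => ?_⟩
      obtain ⟨e, he, hTe⟩ := mem_shadow_iff_exists_sdiff.1 h
      exact (mem_filter.1 he).2 hTe.1
    have hTc : T.card + 1 = k := by
      obtain ⟨e, he, w, hw, rfl⟩ := mem_shadow_iff.1 hT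
      rw [card_erase_add_one hw, hF₀ e (hF he)]
    have hc : (F.filter fun e => T ⊆ e).card ≤
        (univ.filter fun w => w ∉ T ∧ insert w T ∈ F).card := by
      refine (card_le_card (t := (univ.filter fun w => w ∉ T ∧ insert w T ∈ F).image
        fun w => insert w T) ?_).trans card_image_le
      intro e he
      obtain ⟨heF, hTe⟩ := mem_filter.1 he
      have h1 : (e \ T).card = 1 := by
        rw [card_sdiff_of_subset hTe, hF₀ e (hF heF)]; omega
      obtain ⟨w, hw⟩ := card_eq_one.1 h1
      have hwe : w ∉ T := by
        have : w ∈ e \ T := by simp [hw]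
        exact (mem_sdiff.1 this).2
      have hins : insert w T = e := by
        rw [insert_eq, ← hw, sdiff_union_of_subset hTe]
      exact mem_image.2 ⟨w, by simp [hwe, hins, heF], hins⟩
    have hsplit := card_filter_add_card_filter_not (s := F) (fun e => T ⊆ e)
    have hKs : (K : ℤ) * ((F.filter fun e => ¬ T ⊆ e).shadow.card + 1) ≤ K * F.shadow.card :=
      mul_le_mul_of_nonneg_left (by exact_mod_cast hs) (by positivity)
    zify at hsplit hc hlt
    linarith

/-- The deterministic part of the argument, for a general host `H`. If `H` has many edges compared
with its shadow and with the number `Δ` of edges meeting any `q`-set, and if no `q`-set `Q` contains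
`K` extensions of each of `m` disjoint shadow sets, then every `r`-colouring of `H` has a
monochromatic tight path on `n` vertices. -/
lemma mono_tightPath {W : Type*} [DecidableEq W] [Fintype W] {k n q m K Δ r : ℕ} (hk : 1 < k)
    (H : Finset (Finset W)) (hH : ∀ e ∈ H, e.card = k) (hqm : n + 2 * k * m ≤ q)
    (hcov : ∀ Q : Finset W, Q.card ≤ q → (H.filter fun e => ¬ Disjoint Q e).card ≤ Δ)
    (hbig : r * (K * H.shadow.card + Δ) < H.card)
    (hB : ∀ (𝒯 : Finset (Finset W)) (Q : Finset W), 𝒯.card = m →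
      (𝒯 : Set (Finset W)).PairwiseDisjoint id → 𝒯 ⊆ H.shadow → Q.card ≤ q →
      ¬ ∀ T ∈ 𝒯, K ≤ (Q.filter fun w => w ∉ T ∧ insert w T ∈ H).card)
    (χ : Finset W → Fin r) :
    ∃ (y : ℕ → W) (c : Fin r), IsTightPath k (H.filter fun e => χ e = c) y n := by
  obtain ⟨c, -, hc⟩ : ∃ c ∈ (univ : Finset (Fin r)),
      K * H.shadow.card + Δ < (H.filter fun e => χ e = c).card := by
    apply exists_lt_card_fiber_of_mul_lt_card_of_maps_to (fun a _ => mem_univ _)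
    simpa using hbig
  by_contra! hno
  set F₀ := H.filter fun e => χ e = c with hF₀
  have hF₀H : F₀ ⊆ H := filter_subset _ _
  obtain ⟨F, hFF₀, hFc, hdeg⟩ := clean F₀ (fun e he => hH e (hF₀H he)) K
  have hFH := hFF₀.trans hF₀H
  have hsh : K * F₀.shadow.card ≤ K * H.shadow.card :=
    Nat.mul_le_mul_left _ (card_le_card (shadow_monotone hF₀H))
  have hcov' : ∀ Q : Finset W, Q.card ≤ q → ∃ e ∈ F, Disjoint Q e := by
    intro Q hQ
    by_contra! h
    have : F.card ≤ Δ := (card_le_card fun e he => mem_filter.2 ⟨hFH he, h e he⟩).trans (hcov Q hQ)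
    omega
  have hnoF : ∀ y, ¬ IsTightPath k F y n := fun y hy =>
    hno y c ⟨hy.1, fun i hi => hFF₀ (hy.2 i hi)⟩
  obtain ⟨D, y, p, 𝒯, hDc, hy, hDy, h𝒯, hpd, hT⟩ :=
    dfs hk (fun e he => hH e (hFH he)) hnoF q hcov' m (by omega)
  have hpn : p < n := by
    by_contra! h
    exact hnoF y (hy.mono h)
  refine hB 𝒯 (D ∪ (range p).image y) h𝒯 hpd
    (fun T hT' => shadow_monotone hFH (hT T hT').2.1) ?_ ?_
  · refine (card_union_le _ _).trans ?_
    have := card_image_le (s := range p) (f := y)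
    rw [card_range] at this
    omega
  · intro T hT'
    obtain ⟨-, h2, h3⟩ := hT T hT'
    refine (hdeg T h2).trans (card_le_card fun w hw => ?_)
    obtain ⟨-, hw1, hw2⟩ := mem_filter.1 hw
    exact mem_filter.2 ⟨h3 w hw1 hw2, hw1, hFH hw2⟩

/-! ### The cycle hypergraph of a digraph on cyclically ordered parts -/

/-- The random digraph: `ω` chooses for every vertex `x` of part `a` and every one of the `L` groups
of size `s` in part `a + 1` a single vertex of that group, and `Adj ω a x y` says that `y` (in part
`a + 1`) is chosen by `x`. All parts are copies of `Fin L × Fin s`, whose first coordinate is the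
group. -/
def Adj {k L s : ℕ} (ω : (ZMod k × (Fin L × Fin s)) × Fin L → Fin s) (a : ZMod k)
    (x y : Fin L × Fin s) : Prop := ω ((a, x), y.1) = y.2

instance {k L s : ℕ} (ω : (ZMod k × (Fin L × Fin s)) × Fin L → Fin s) (a : ZMod k)
    (x y : Fin L × Fin s) : Decidable (Adj ω a x y) := inferInstanceAs (Decidable (_ = _))

/-- `x` selects a vertex from each part so that consecutive ones are adjacent, all the way around. -/
def IsCyc {k L s : ℕ} (ω : (ZMod k × (Fin L × Fin s)) × Fin L → Fin s)
    (x : ZMod k → Fin L × Fin s) : Prop := ∀ a, Adj ω a (x a) (x (a + 1))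

/-- The graph of `x` as a set of `k` vertices, one in each part. -/
def gr {k : ℕ} [NeZero k] {V : Type*} [DecidableEq V] (x : ZMod k → V) : Finset (ZMod k × V) :=
  univ.image fun a => (a, x a)

lemma mem_gr {k : ℕ} [NeZero k] {V : Type*} [DecidableEq V] (x : ZMod k → V) (w : ZMod k × V) :
    w ∈ gr x ↔ x w.1 = w.2 := by
  obtain ⟨a, v⟩ := w
  simp only [gr, mem_image, mem_univ, true_and, Prod.mk.injEq]
  constructor
  · rintro ⟨b, rfl, rfl⟩; rfl
  · rintro h; exact ⟨a, rfl, h⟩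

lemma card_gr {k : ℕ} [NeZero k] {V : Type*} [DecidableEq V] (x : ZMod k → V) :
    (gr x).card = k := by
  rw [gr, card_image_of_injective _ (fun a b h => (Prod.mk.inj h).1), card_univ, ZMod.card]

lemma gr_injective {k : ℕ} [NeZero k] {V : Type*} [DecidableEq V] :
    Function.Injective (gr : (ZMod k → V) → _) := by
  intro x y h
  funext a
  have : (a, x a) ∈ gr y := by rw [← h, mem_gr]
  exact ((mem_gr _ _).1 this).symm

open Classical in
/-- The set of all cycles of `ω` that go once around the parts. -/
noncomputable def cycles {k L s : ℕ} [NeZero k]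
    (ω : (ZMod k × (Fin L × Fin s)) × Fin L → Fin s) : Finset (ZMod k → Fin L × Fin s) :=
  univ.filter (IsCyc ω)

/-- The host hypergraph: its edges are the vertex sets of the cycles of `ω`. -/
noncomputable def cycleHypergraph {k L s : ℕ} [NeZero k]
    (ω : (ZMod k × (Fin L × Fin s)) × Fin L → Fin s) :
    Finset (Finset (ZMod k × (Fin L × Fin s))) := (cycles ω).image gr

/-- A cycle is determined by one vertex and the groups of the following ones, because each vertex
has only one out-neighbour in each group. -/
lemma cyc_agree {k L s : ℕ} {ω : (ZMod k × (Fin L × Fin s)) × Fin L → Fin s}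
    {x x' : ZMod k → Fin L × Fin s} (hx : IsCyc ω x) (hx' : IsCyc ω x') (b : ZMod k)
    (hb : x b = x' b) (N : ℕ)
    (hg : ∀ j : Fin N, (x (b + 1 + (j : ℕ))).1 = (x' (b + 1 + (j : ℕ))).1) (j : ℕ) (hj : j ≤ N) :
    x (b + j) = x' (b + j) := by
  induction j with
  | zero => simpa using hb
  | succ j ih =>
    have h1 := hx (b + j)
    have h2 := hx' (b + j)
    have h3 := hg ⟨j, hj⟩
    have e : b + ((j + 1 : ℕ) : ZMod k) = b + j + 1 := by push_cast; ring
    have e' : b + 1 + (j : ZMod k) = b + j + 1 := by ring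
    simp only [e'] at h3
    rw [e]
    unfold Adj at h1 h2
    apply Prod.ext h3
    rw [← h1, ← h2, ih (by omega), h3]

section
variable {k L s : ℕ} [NeZero k] {ω : (ZMod k × (Fin L × Fin s)) × Fin L → Fin s}

lemma mem_cycles {x} : x ∈ cycles ω ↔ IsCyc ω x := by simp [cycles]

lemma card_cycleHypergraph : (cycleHypergraph ω).card = (cycles ω).card :=
  card_image_of_injective _ gr_injective

lemma uniform_cycleHypergraph : ∀ e ∈ cycleHypergraph ω, e.card = k := by
  intro e he
  obtain ⟨x, -, rfl⟩ := mem_image.1 he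
  exact card_gr x

lemma exists_offset (a b : ZMod k) : ∃ j : ℕ, j < k ∧ b = a + j :=
  ⟨(b - a).val, ZMod.val_lt _, by simp⟩

/-- Cycles through a given vertex are bounded by choosing the groups of the next `k - 2` vertices,
which determine these, and then the last vertex among the common neighbours of two known ones. -/
lemma cycles_through_le (hk : 2 ≤ k) {Δ : ℕ}
    (hA : ∀ a u v, (univ.filter fun x => Adj ω a u x ∧ Adj ω (a + 1) x v).card ≤ Δ)
    (a : ZMod k) (v : Fin L × Fin s) :
    ((cycles ω).filter fun x => x a = v).card ≤ Δ * L ^ (k - 2) := by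
  refine (card_le_mul_card_image (f := fun x => fun j : Fin (k - 2) => (x (a + 1 + (j : ℕ))).1)
    _ Δ ?_).trans ?_
  · intro g _
    rcases ((((cycles ω).filter fun x => x a = v).filter
      fun x => (fun j : Fin (k - 2) => (x (a + 1 + (j : ℕ))).1) = g)).eq_empty_or_nonempty with h | h
    · rw [h]; simp
    obtain ⟨x₀, hx₀⟩ := h
    simp only [mem_filter, mem_cycles] at hx₀
    obtain ⟨⟨hc₀, hv₀⟩, hg₀⟩ := hx₀
    have hag : ∀ x, IsCyc ω x → x a = v → (fun j : Fin (k - 2) => (x (a + 1 + (j : ℕ))).1) = g →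
        ∀ j ≤ k - 2, x (a + (j : ℕ)) = x₀ (a + (j : ℕ)) := by
      intro x hx hv hg j hj
      exact cyc_agree hx hc₀ a (hv.trans hv₀.symm) (k - 2)
        (fun i => (congrFun hg i).trans (congrFun hg₀ i).symm) j hj
    have e2 : a - 2 = a + ((k - 2 : ℕ) : ZMod k) := by
      rw [Nat.cast_sub hk]; simp; ring
    have e1 : a - 1 = a + ((k - 1 : ℕ) : ZMod k) := by
      rw [Nat.cast_sub (by omega)]; simp; ring
    refine le_trans (card_le_card_of_injOn (fun x => x (a - 1)) ?_ ?_) (hA (a - 2) (x₀ (a - 2)) v)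
    · intro x hx
      simp only [coe_filter, Set.mem_ofPred_eq, mem_filter, mem_cycles, mem_univ, true_and] at hx ⊢
      obtain ⟨⟨hc, hv⟩, hg⟩ := hx
      have h1 := hc (a - 2)
      have h2 := hc (a - 1)
      have h3 := hag x hc hv hg (k - 2) le_rfl
      rw [← e2] at h3
      rw [h3] at h1
      have e3 : a - 2 + 1 = a - 1 := by ring
      rw [e3] at h1 ⊢
      rw [sub_add_cancel, hv] at h2
      exact ⟨h1, h2⟩
    · intro x hx x' hx' hxx
      simp only [coe_filter, Set.mem_ofPred_eq, mem_filter, mem_cycles] at hx hx' hxx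
      funext b
      obtain ⟨j, hj, rfl⟩ := exists_offset a b
      rcases Nat.lt_or_ge (k - 2) j with h | h
      · obtain rfl : j = k - 1 := by omega
        rwa [e1] at hxx
      · rw [hag x hx.1.1 hx.1.2 hx.2 j h, hag x' hx'.1.1 hx'.1.2 hx'.2 j h]
  · apply Nat.mul_le_mul_left
    refine (card_le_univ _).trans ?_
    simp

lemma cycles_touching_le (hk : 2 ≤ k) {Δ : ℕ}
    (hA : ∀ a u v, (univ.filter fun x => Adj ω a u x ∧ Adj ω (a + 1) x v).card ≤ Δ)
    (Q : Finset (ZMod k × (Fin L × Fin s))) :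
    ((cycleHypergraph ω).filter fun e => ¬ Disjoint Q e).card ≤ Q.card * (Δ * L ^ (k - 2)) := by
  have : ((cycleHypergraph ω).filter fun e => ¬ Disjoint Q e) ⊆
      Q.biUnion fun w => ((cycles ω).filter fun x => x w.1 = w.2).image gr := by
    intro e he
    obtain ⟨he, hd⟩ := mem_filter.1 he
    obtain ⟨x, hx, rfl⟩ := mem_image.1 he
    obtain ⟨w, hw, hw'⟩ := not_disjoint_iff.1 hd
    exact mem_biUnion.2 ⟨w, hw, mem_image_of_mem _ (mem_filter.2 ⟨hx, (mem_gr _ _).1 hw'⟩)⟩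
  refine (card_le_card this).trans (card_biUnion_le_card_mul _ _ _ fun w _ => ?_)
  exact card_image_le.trans (cycles_through_le hk hA w.1 w.2)

lemma card_cycles_le (hk : 2 ≤ k) {Δ : ℕ}
    (hA : ∀ a u v, (univ.filter fun x => Adj ω a u x ∧ Adj ω (a + 1) x v).card ≤ Δ) :
    (cycles ω).card ≤ (L * s) * (Δ * L ^ (k - 2)) := by
  have : cycles ω ⊆ (univ : Finset (Fin L × Fin s)).biUnion
      fun v => (cycles ω).filter fun x => x 0 = v := by
    intro x hx
    exact mem_biUnion.2 ⟨x 0, mem_univ _, mem_filter.2 ⟨hx, rfl⟩⟩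
  refine (card_le_card this).trans ((card_biUnion_le_card_mul _ _ _ fun v _ =>
    cycles_through_le hk hA 0 v).trans ?_)
  simp

lemma mem_shadow_cycleHypergraph {T} (hT : T ∈ (cycleHypergraph ω).shadow) :
    ∃ x b, IsCyc ω x ∧ T = (gr x).erase (b + 1, x (b + 1)) := by
  obtain ⟨e, he, w, hw, rfl⟩ := mem_shadow_iff.1 hT
  obtain ⟨x, hx, rfl⟩ := mem_image.1 he
  obtain ⟨a, v⟩ := w
  have := (mem_gr _ _).1 hw
  simp only at this
  subst this
  exact ⟨x, a - 1, mem_cycles.1 hx, by simp⟩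

lemma mem_erase_gr {x : ZMod k → Fin L × Fin s} {b : ZMod k} {w} :
    w ∈ (gr x).erase (b, x b) ↔ w.1 ≠ b ∧ x w.1 = w.2 := by
  obtain ⟨a, v⟩ := w
  rw [mem_erase, mem_gr]
  simp only [ne_eq, Prod.mk.injEq, not_and]
  constructor
  · rintro ⟨h1, rfl⟩
    refine ⟨?_, rfl⟩
    rintro rfl
    exact h1 rfl rfl
  · rintro ⟨h1, h2⟩
    exact ⟨fun h => (h1 h).elim, h2⟩

/-- A shadow set is a cycle with one vertex removed, hence a path of `k - 1` vertices: it is given by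
the missing part, the first vertex after it and the groups of the other `k - 2`. -/
lemma card_shadow_le [NeZero L] [NeZero s] (hk : 2 ≤ k) :
    (cycleHypergraph ω).shadow.card ≤ k * (L * s) * L ^ (k - 2) := by
  choose! x b hx hT using fun T => mem_shadow_cycleHypergraph (ω := ω) (T := T)
  have : (cycleHypergraph ω).shadow.card ≤
      (univ : Finset (ZMod k × (Fin L × Fin s) × (Fin (k - 2) → Fin L))).card := by
    apply card_le_card_of_injOn (fun T => (b T, x T (b T + 1 + 1),
      fun j : Fin (k - 2) => (x T (b T + 1 + 1 + 1 + (j : ℕ))).1)) (fun _ _ => mem_coe.2 (mem_univ _))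
    intro T hT1 T' hT1' h
    simp only [Prod.mk.injEq] at h
    obtain ⟨hb, hv, hg⟩ := h
    rw [hT T hT1, hT T' hT1']
    rw [← hb] at hv hg ⊢
    have hag := cyc_agree (hx T hT1) (hx T' hT1') _ hv (k - 2) (fun j => congrFun hg j)
    ext ⟨a, v⟩
    rw [mem_erase_gr, mem_erase_gr]
    apply and_congr_right
    intro ha
    obtain ⟨j, hj, rfl⟩ := exists_offset (b T + 1 + 1) a
    rcases Nat.lt_or_ge (k - 2) j with h | h
    · obtain rfl : j = k - 1 := by omega
      exfalso
      apply ha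
      show b T + 1 + 1 + ((k - 1 : ℕ) : ZMod k) = b T + 1
      rw [Nat.cast_sub (by omega)]; simp
    · show x T _ = _ ↔ x T' _ = _
      rw [hag j h]
  refine this.trans ?_
  simp [ZMod.card, mul_assoc]

/-- A vertex extending a shadow set to an edge lies in the missing part and is a common neighbour of
the two vertices in the neighbouring parts. -/
lemma insert_mem_cycleHypergraph (hk : 2 ≤ k) {x : ZMod k → Fin L × Fin s} {b : ZMod k}
    {w : ZMod k × (Fin L × Fin s)} (hins : insert w ((gr x).erase (b + 1, x (b + 1))) ∈ cycleHypergraph ω) :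
    ∃ z, w = (b + 1, z) ∧ Adj ω b (x b) z ∧ Adj ω (b + 1) z (x (b + 1 + 1)) := by
  have : Fact (1 < k) := ⟨hk⟩
  obtain ⟨x', hx', he⟩ := mem_image.1 hins
  rw [mem_cycles] at hx'
  have hag : ∀ a, a ≠ b + 1 → x' a = x a := by
    intro a ha
    have : (a, x a) ∈ gr x' := by
      rw [he]
      exact mem_insert_of_mem (mem_erase_gr.2 ⟨ha, rfl⟩)
    exact (mem_gr _ _).1 this
  have hmem : (b + 1, x' (b + 1)) ∈ gr x' := (mem_gr _ _).2 rfl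
  rw [he, mem_insert] at hmem
  have hwz : w = (b + 1, x' (b + 1)) := by
    rcases hmem with h | h
    · exact h.symm
    · exact ((mem_erase_gr.1 h).1 rfl).elim
  refine ⟨x' (b + 1), hwz, ?_, ?_⟩
  · have := hx' b
    rwa [hag b (by simp)] at this
  · have := hx' (b + 1)
    rwa [hag (b + 1 + 1) (by simp)] at this

/-- If no part has `m` disjoint pairs `(u j, v j)` each with `K` common neighbours in one set of size
`q`, then no set `Q` of at most `q` vertices contains `K` extensions of each of `k * m` disjoint
shadow sets: some `m` of these miss the same part, and their ends next to it are such pairs. -/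
lemma no_dead_matching [NeZero L] [NeZero s] (hk : 2 ≤ k) {m q K : ℕ} (hq : q ≤ L * s)
    (hB : ∀ (a : ZMod k) (u v : Fin m → Fin L × Fin s) (φ : Fin q → Fin L × Fin s)
      (Y : Fin m → Finset (Fin q)), Function.Injective u → Function.Injective v →
      Function.Injective φ → (∀ j, (Y j).card = K) →
      ¬ ∀ j, ∀ i ∈ Y j, Adj ω a (u j) (φ i) ∧ Adj ω (a + 1) (φ i) (v j))
    (𝒯 : Finset (Finset (ZMod k × (Fin L × Fin s)))) (Q : Finset (ZMod k × (Fin L × Fin s)))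
    (h𝒯 : 𝒯.card = k * m) (hpd : (𝒯 : Set (Finset (ZMod k × (Fin L × Fin s)))).PairwiseDisjoint id)
    (hsh : 𝒯 ⊆ (cycleHypergraph ω).shadow) (hQ : Q.card ≤ q) :
    ¬ ∀ T ∈ 𝒯, K ≤ (Q.filter fun w => w ∉ T ∧ insert w T ∈ cycleHypergraph ω).card := by
  have : Fact (1 < k) := ⟨hk⟩
  intro hall
  choose! x b hx hT using fun T => mem_shadow_cycleHypergraph (ω := ω) (T := T)
  obtain ⟨a, -, ha⟩ : ∃ a ∈ (univ : Finset (ZMod k)), m ≤ (𝒯.filter fun T => b T = a).card := by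
    apply exists_le_card_fiber_of_mul_le_card_of_maps_to (fun _ _ => mem_univ _) univ_nonempty
    simp [h𝒯, ZMod.card]
  obtain ⟨𝒯₁, h𝒯₁, hc₁⟩ := exists_subset_card_eq ha
  let f := (𝒯₁.equivFinOfCardEq hc₁).symm
  have hf𝒯 : ∀ j, (f j : Finset _) ∈ 𝒯 := fun j => (mem_filter.1 (h𝒯₁ (f j).2)).1
  have hfb : ∀ j, b (f j) = a := fun j => (mem_filter.1 (h𝒯₁ (f j).2)).2
  have hfT : ∀ j, (f j : Finset _) = (gr (x (f j))).erase (a + 1, x (f j) (a + 1)) := by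
    intro j
    have := hT (f j) (hsh (hf𝒯 j))
    rwa [hfb] at this
  have hinj : ∀ c, c ≠ a + 1 → Function.Injective fun j => x (f j) c := by
    intro c hc i j hij
    by_contra hne
    have hne' : (f i).1 ≠ (f j).1 :=
      fun h => hne (f.injective (Subtype.val_injective h))
    have hd : Disjoint (f i).1 (f j).1 := hpd (hf𝒯 i) (hf𝒯 j) hne'
    have h1 : (c, x (f i) c) ∈ (f i : Finset _) := by
      have := mem_erase_gr (w := (c, x (f i) c)).2 ⟨hc, rfl⟩
      rwa [← hfT i] at this
    have h2 : (c, x (f i) c) ∈ (f j : Finset _) := by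
      have := mem_erase_gr (w := (c, x (f i) c)).2 ⟨hc, hij.symm⟩
      rwa [← hfT j] at this
    exact disjoint_left.1 hd h1 h2
  obtain ⟨Q', hQ', hQ'c⟩ : ∃ Q' : Finset (Fin L × Fin s), Q.image Prod.snd ⊆ Q' ∧ Q'.card = q :=
    exists_superset_card_eq (card_image_le.trans hQ) (by simpa using hq)
  let φ := (Q'.equivFinOfCardEq hQ'c).symm
  have hY : ∀ j, ∃ Y : Finset (Fin q), Y.card = K ∧ ∀ i ∈ Y,
      Adj ω a (x (f j) a) (φ i) ∧ Adj ω (a + 1) (φ i) (x (f j) (a + 1 + 1)) := by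
    intro j
    classical
    have h1 := hall _ (hf𝒯 j)
    have h2 : (Q.filter fun w => w ∉ (f j : Finset _) ∧
        insert w (f j : Finset _) ∈ cycleHypergraph ω) ⊆
        (univ.filter fun i => Adj ω a (x (f j) a) (φ i) ∧
          Adj ω (a + 1) (φ i) (x (f j) (a + 1 + 1))).image fun i => (a + 1, (φ i : Fin L × Fin s)) := by
      intro w hw
      obtain ⟨hwQ, -, hw2⟩ := mem_filter.1 hw
      rw [hfT j] at hw2
      obtain ⟨z, rfl, hz1, hz2⟩ := insert_mem_cycleHypergraph hk hw2
      have hz : z ∈ Q' := hQ' (mem_image.2 ⟨_, hwQ, rfl⟩)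
      have e : ((φ (φ.symm ⟨z, hz⟩) : Q') : Fin L × Fin s) = z := by simp
      refine mem_image.2 ⟨φ.symm ⟨z, hz⟩, mem_filter.2 ⟨mem_univ _, ?_⟩, ?_⟩
      · rw [e]; exact ⟨hz1, hz2⟩
      · simp only [e]
    obtain ⟨Y, hYs, hYc⟩ := exists_subset_card_eq (h1.trans ((card_le_card h2).trans card_image_le))
    exact ⟨Y, hYc, fun i hi => (mem_filter.1 (hYs hi)).2⟩
  choose Y hYc hYA using hY
  exact hB a (fun j => x (f j) a) (fun j => x (f j) (a + 1 + 1)) (fun i => φ i) Y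
    (hinj a (by simp)) (hinj (a + 1 + 1) (by simp))
    (Subtype.val_injective.comp φ.injective) hYc hYA
end

/-! ### First-moment estimates -/

/-- The probability that `|J|` given independent uniform choices agree with `ω₀` is `s ^ (-|J|)`. -/
lemma count_eq {I : Type*} [Fintype I] [DecidableEq I] {s : ℕ} (J : Finset I) (ω₀ : I → Fin s) :
    (univ.filter fun ω : I → Fin s => ∀ i ∈ J, ω i = ω₀ i).card * s ^ J.card
      = s ^ Fintype.card I := by
  have : (univ.filter fun ω : I → Fin s => ∀ i ∈ J, ω i = ω₀ i) =
      Fintype.piFinset fun i => if i ∈ J then {ω₀ i} else univ := by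
    ext ω
    simp only [mem_filter, mem_univ, true_and, Fintype.mem_piFinset]
    refine forall_congr' fun i => ?_
    split_ifs with h <;> simp [h]
  rw [this, Fintype.card_piFinset]
  have h2 : s ^ J.card = ∏ i : I, if i ∈ J then s else 1 := by
    rw [prod_ite_mem, univ_inter, prod_const]
  rw [h2, ← prod_mul_distrib, ← card_univ, ← prod_const]
  refine prod_congr rfl fun i _ => ?_
  split_ifs <;> simp

/-- As `count_eq`, for a set of prescriptions that may contradict one another. -/
lemma count_le {I : Type*} [Fintype I] [DecidableEq I] {s : ℕ} (S : Finset (I × Fin s)) :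
    (univ.filter fun ω : I → Fin s => ∀ p ∈ S, ω p.1 = p.2).card * s ^ S.card
      ≤ s ^ Fintype.card I := by
  rcases (univ.filter fun ω : I → Fin s => ∀ p ∈ S, ω p.1 = p.2).eq_empty_or_nonempty with h | h
  · rw [h]; simp
  obtain ⟨ω₀, h₀⟩ := h
  replace h₀ := (mem_filter.1 h₀).2
  have hc : (S.image Prod.fst).card = S.card := by
    apply card_image_of_injOn
    intro p hp p' hp' h
    exact Prod.ext h (by rw [← h₀ p hp, ← h₀ p' hp', h])
  rw [← count_eq (S.image Prod.fst) ω₀, hc]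
  apply Nat.mul_le_mul_right
  apply card_le_card
  intro ω hω
  replace hω := (mem_filter.1 hω).2
  refine mem_filter.2 ⟨mem_univ _, fun i hi => ?_⟩
  obtain ⟨p, hp, rfl⟩ := mem_image.1 hi
  rw [hω p hp, h₀ p hp]

/-- Union bound: an event that forces one of a family of sets of `N` prescriptions has probability at
most the size of the family times `s ^ (-N)`. -/
lemma union_bound {I ι : Type*} [Fintype I] [DecidableEq I] [Fintype ι] {s N : ℕ}
    (S : ι → Finset (I × Fin s)) (hS : ∀ i, (S i).card = N) (P : (I → Fin s) → Prop)
    [DecidablePred P] (hP : ∀ ω, P ω → ∃ i, ∀ p ∈ S i, ω p.1 = p.2) :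
    (univ.filter P).card * s ^ N ≤ Fintype.card ι * s ^ Fintype.card I := by
  have : univ.filter P ⊆ (univ : Finset ι).biUnion fun i =>
      univ.filter fun ω : I → Fin s => ∀ p ∈ S i, ω p.1 = p.2 := by
    intro ω hω
    obtain ⟨i, hi⟩ := hP ω (mem_filter.1 hω).2
    exact mem_biUnion.2 ⟨i, mem_univ _, mem_filter.2 ⟨mem_univ _, hi⟩⟩
  calc _ ≤ (∑ i : ι, (univ.filter fun ω : I → Fin s => ∀ p ∈ S i, ω p.1 = p.2).card) * s ^ N :=
        Nat.mul_le_mul_right _ ((card_le_card this).trans card_biUnion_le)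
    _ = ∑ i : ι, (univ.filter fun ω : I → Fin s => ∀ p ∈ S i, ω p.1 = p.2).card * s ^ N := sum_mul _ _ _
    _ ≤ ∑ i : ι, s ^ Fintype.card I := sum_le_sum fun i _ => by
        have := count_le (S i)
        rwa [hS i] at this
    _ = _ := by simp

/-- The bad event: for some part `a` there are `m` pairs `(u j, v j)`, with distinct `u j` in part `a`
and distinct `v j` in part `a + 2`, each having `K` common neighbours in one `q`-set of part `a + 1`.
The `q`-set is given by an enumeration `φ` from the list `Φ` of admissible ones, and the `K` common
neighbours by their indices `Y j`. -/
def HasDenseMatching {k L s m q : ℕ} (K : ℕ) (Φ : Finset (Fin q → Fin L × Fin s))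
    (ω : (ZMod k × (Fin L × Fin s)) × Fin L → Fin s) : Prop :=
  ∃ (a : ZMod k) (u v : Fin m → Fin L × Fin s) (φ : Fin q → Fin L × Fin s)
      (Y : Fin m → Finset (Fin q)), Function.Injective u ∧ Function.Injective v ∧ φ ∈ Φ ∧
      (∀ j, (Y j).card = K) ∧
      ∀ j, ∀ i ∈ Y j, Adj ω a (u j) (φ i) ∧ Adj ω (a + 1) (φ i) (v j)

open Classical in
/-- First-moment bound for the bad event: each choice of `a, u, v, φ, Y` prescribes `2 * m * K` distinct
values of `ω`. -/
lemma card_dense_le {k L s m q : ℕ} [NeZero k] (hk : 2 ≤ k) (K : ℕ)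
    (Φ : Finset (Fin q → Fin L × Fin s)) (hΦ : ∀ φ ∈ Φ, Function.Injective φ) :
    (univ.filter (HasDenseMatching (k := k) (m := m) K Φ)).card * s ^ (2 * (m * K)) ≤
      (k * ((L * s) ^ m * ((L * s) ^ m * (Φ.card * (q.choose K) ^ m)))) *
        s ^ Fintype.card ((ZMod k × (Fin L × Fin s)) × Fin L) := by
  have : Fact (1 < k) := ⟨hk⟩
  let ι := ZMod k × {u : Fin m → Fin L × Fin s // Function.Injective u} ×
    {u : Fin m → Fin L × Fin s // Function.Injective u} × Φ ×
    (Fin m → (powersetCard K (univ : Finset (Fin q))))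
  -- `f₁` and `f₂` are the prescriptions saying that `u j` is adjacent to `φ i` and `φ i` to `v j`.
  let f₁ : ι → (Σ _ : Fin m, Fin q) → ((ZMod k × (Fin L × Fin s)) × Fin L) × Fin s :=
    fun t p => (((t.1, t.2.1.1 p.1), (t.2.2.2.1.1 p.2).1), (t.2.2.2.1.1 p.2).2)
  let f₂ : ι → (Σ _ : Fin m, Fin q) → ((ZMod k × (Fin L × Fin s)) × Fin L) × Fin s :=
    fun t p => (((t.1 + 1, t.2.2.2.1.1 p.2), (t.2.2.1.1 p.1).1), (t.2.2.1.1 p.1).2)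
  let R : ι → Finset (Σ _ : Fin m, Fin q) := fun t => univ.sigma fun j => (t.2.2.2.2 j).1
  have hR : ∀ t, (R t).card = m * K := by
    intro t
    rw [card_sigma, sum_congr rfl fun j _ => (mem_powersetCard.1 (t.2.2.2.2 j).2).2]
    simp
  have hf₁ : ∀ t, Function.Injective (f₁ t) := by
    rintro ⟨a, u, v, φ, Y⟩ ⟨j, i⟩ ⟨j', i'⟩ h
    simp only [f₁, Prod.mk.injEq, true_and] at h
    obtain ⟨⟨h1, h2⟩, h3⟩ := h
    obtain rfl := u.2 h1
    obtain rfl := hΦ _ φ.2 (Prod.ext h2 h3)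
    rfl
  have hf₂ : ∀ t, Function.Injective (f₂ t) := by
    rintro ⟨a, u, v, φ, Y⟩ ⟨j, i⟩ ⟨j', i'⟩ h
    simp only [f₂, Prod.mk.injEq, true_and] at h
    obtain ⟨⟨h1, h2⟩, h3⟩ := h
    obtain rfl := hΦ _ φ.2 h1
    obtain rfl := v.2 (Prod.ext h2 h3)
    rfl
  have hcard : Fintype.card ι ≤
      k * ((L * s) ^ m * ((L * s) ^ m * (Φ.card * (q.choose K) ^ m))) := by
    have hu : Fintype.card {u : Fin m → Fin L × Fin s // Function.Injective u} ≤ (L * s) ^ m := by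
      refine (Fintype.card_subtype_le _).trans ?_
      simp
    simp only [ι, Fintype.card_prod, ZMod.card, Fintype.card_coe, Fintype.card_fun,
      card_powersetCard, card_univ, Fintype.card_fin]
    gcongr
  refine (union_bound (ι := ι) (fun t => (R t).image (f₁ t) ∪ (R t).image (f₂ t)) ?_ _ ?_).trans
    (Nat.mul_le_mul_right _ hcard)
  · intro t
    rw [card_union_of_disjoint, card_image_of_injective _ (hf₁ t),
      card_image_of_injective _ (hf₂ t), hR]
    · ring
    · rw [disjoint_left]
      intro p hp hp'
      obtain ⟨z, -, rfl⟩ := mem_image.1 hp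
      obtain ⟨z', -, h⟩ := mem_image.1 hp'
      simp [f₁, f₂] at h
  · rintro ω ⟨a, u, v, φ, Y, hu, hv, hφ, hY, h⟩
    refine ⟨⟨a, ⟨u, hu⟩, ⟨v, hv⟩, ⟨φ, hφ⟩, fun j => ⟨Y j, mem_powersetCard.2 ⟨subset_univ _, hY j⟩⟩⟩, ?_⟩
    intro p hp
    rcases mem_union.1 hp with hp | hp
    · obtain ⟨z, hz, rfl⟩ := mem_image.1 hp
      exact (h z.1 z.2 (mem_sigma.1 hz).2).1
    · obtain ⟨z, hz, rfl⟩ := mem_image.1 hp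
      exact (h z.1 z.2 (mem_sigma.1 hz).2).2

/-- The decidability instances are ordinary implicit arguments, so that two filters over the same
predicate can be compared whichever instances elaboration produced for them. -/
lemma card_filter_congr_inst {α : Type*} [Fintype α] {p p' : α → Prop} {hp : DecidablePred p}
    {hp' : DecidablePred p'} (h : ∀ a, p a ↔ p' a) :
    (univ.filter p).card = (univ.filter p').card := by
  congr 1
  exact filter_congr fun a _ => h a

/-- The expected number of cycles is `L ^ k`. -/
lemma sum_cycles {k L s : ℕ} [NeZero k] :
    (∑ ω : (ZMod k × (Fin L × Fin s)) × Fin L → Fin s, (cycles ω).card) * s ^ k =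
      (L * s) ^ k * s ^ Fintype.card ((ZMod k × (Fin L × Fin s)) × Fin L) := by
  classical
  have h1 : ∀ x : ZMod k → Fin L × Fin s,
      (univ.filter fun ω : (ZMod k × (Fin L × Fin s)) × Fin L → Fin s => IsCyc ω x).card * s ^ k =
        s ^ Fintype.card ((ZMod k × (Fin L × Fin s)) × Fin L) := by
    intro x
    have hinj : Function.Injective fun a : ZMod k => ((a, x a), (x (a + 1)).1) := by
      intro a b h
      exact (Prod.mk.inj (Prod.mk.inj h).1).1
    have := count_eq (univ.image fun a : ZMod k => ((a, x a), (x (a + 1)).1))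
      (fun i => (x (i.1.1 + 1)).2)
    rw [card_image_of_injective _ hinj, card_univ, ZMod.card] at this
    rw [← this]
    congr 1
    refine card_filter_congr_inst fun ω => ?_
    simp [IsCyc, Adj]
  have h2 : (∑ ω : (ZMod k × (Fin L × Fin s)) × Fin L → Fin s, (cycles ω).card) =
      ∑ x : ZMod k → Fin L × Fin s, (univ.filter fun ω => IsCyc ω x).card := by
    simp only [cycles, card_filter]
    exact sum_comm
  rw [h2, sum_mul, sum_congr rfl fun x _ => h1 x]
  simp [ZMod.card]

/-- An event of probability at most `1 / (2 * s ^ k)` accounts for at most `L ^ k / 2` of the expected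
number of cycles, since there are never more than `(L * s) ^ k` of them. So some `ω` outside the event
has at least `L ^ k / 2` cycles. -/
lemma exists_many_cycles {k L s : ℕ} [NeZero k] (hs : 0 < s)
    (P : ((ZMod k × (Fin L × Fin s)) × Fin L → Fin s) → Prop) [DecidablePred P]
    (hP : (univ.filter P).card * (2 * s ^ k) ≤
      s ^ Fintype.card ((ZMod k × (Fin L × Fin s)) × Fin L)) :
    ∃ ω, ¬ P ω ∧ L ^ k ≤ 2 * (cycles ω).card := by
  by_contra! hcon
  set M := s ^ Fintype.card ((ZMod k × (Fin L × Fin s)) × Fin L) with hM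
  have hM0 : 0 < M := by positivity
  have hMc : (univ : Finset ((ZMod k × (Fin L × Fin s)) × Fin L → Fin s)).card = M := by
    rw [card_univ, Fintype.card_fun, Fintype.card_fin]
  have hsum := sum_cycles (k := k) (L := L) (s := s)
  rw [← hM, ← sum_filter_add_sum_filter_not univ P] at hsum
  have hsplit := card_filter_add_card_filter_not (s := univ) P
  rw [hMc] at hsplit
  have hbad : (∑ ω with P ω, (cycles ω).card) ≤ (univ.filter P).card * (L * s) ^ k := by
    rw [← smul_eq_mul]
    apply sum_le_card_nsmul
    intro ω _
    refine (card_le_univ _).trans ?_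
    simp [ZMod.card]
  have hsk : 0 < s ^ k := by positivity
  have hne : (univ.filter fun ω => ¬ P ω).Nonempty := by
    rw [← card_pos]
    by_contra h
    have : (univ.filter P).card = M := by omega
    rw [this] at hP
    nlinarith
  have hgood : (∑ ω with ¬ P ω, 2 * (cycles ω).card) < ∑ ω with ¬ P ω, L ^ k :=
    sum_lt_sum_of_nonempty hne fun ω hω => hcon ω (mem_filter.1 hω).2
  rw [← mul_sum, sum_const, smul_eq_mul] at hgood
  have hg2 : (univ.filter fun ω => ¬ P ω).card * L ^ k ≤ M * L ^ k :=
    Nat.mul_le_mul_right _ (by omega)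
  rw [mul_pow] at hbad hsum
  have h3 : 2 * (∑ ω with P ω, (cycles ω).card) * s ^ k ≤ M * (L ^ k * s ^ k) := by
    calc _ ≤ 2 * ((univ.filter P).card * (L ^ k * s ^ k)) * s ^ k := by gcongr
      _ = (univ.filter P).card * (2 * s ^ k) * (L ^ k * s ^ k) := by ring
      _ ≤ _ := by gcongr
  have h4 : 2 * (∑ ω with ¬ P ω, (cycles ω).card) * s ^ k < M * L ^ k * s ^ k :=
    (Nat.mul_lt_mul_right hsk).2 (hgood.trans_le hg2)
  nlinarith

lemma pow_self_le (K : ℕ) : K ^ K ≤ 3 ^ K * K.factorial := by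
  have h := Real.pow_div_factorial_le_exp (K : ℝ) (by positivity) K
  rw [div_le_iff₀ (by positivity), ← mul_one (K : ℝ), Real.exp_nat_mul, mul_one] at h
  have h3 : Real.exp 1 ^ K ≤ 3 ^ K := by
    gcongr
    linarith [Real.exp_one_lt_d9]
  have : ((K ^ K : ℕ) : ℝ) ≤ ((3 ^ K * K.factorial : ℕ) : ℝ) := by
    push_cast
    refine h.trans ?_
    gcongr
  exact_mod_cast this

/-- If `6 * N ≤ K * s ^ 2`, then `(N choose K) * s ^ (-2 * K) ≤ 2 ^ (-K)`, by
`(N choose K) ≤ N ^ K / K!` and `K ^ K ≤ 3 ^ K * K!`. -/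
lemma choose_mul_le {N K s : ℕ} (h : 6 * N ≤ K * s ^ 2) :
    N.choose K * 2 ^ K ≤ s ^ (2 * K) := by
  have h1 : N.choose K * K.factorial ≤ N ^ K := by
    rw [mul_comm, ← Nat.descFactorial_eq_factorial_mul_choose]
    exact Nat.descFactorial_le_pow _ _
  have h2 : (6 * N) ^ K ≤ (K * s ^ 2) ^ K := Nat.pow_le_pow_left h K
  have h3 := pow_self_le K
  have hf : 0 < 3 ^ K * K.factorial := by positivity
  refine Nat.le_of_mul_le_mul_left ?_ hf
  calc 3 ^ K * K.factorial * (N.choose K * 2 ^ K)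
      = (3 ^ K * 2 ^ K) * (N.choose K * K.factorial) := by ring
    _ ≤ (3 ^ K * 2 ^ K) * N ^ K := by gcongr
    _ = (6 * N) ^ K := by rw [← mul_pow, ← mul_pow]; norm_num
    _ ≤ (K * s ^ 2) ^ K := h2
    _ = K ^ K * s ^ (2 * K) := by rw [mul_pow, ← pow_mul]
    _ ≤ _ := by gcongr

open Classical in
/-- Numerical form of `card_dense_le`: the bad event has probability at most `1 / (4 * s ^ k)` once the
gain `2 ^ (-m * K)` from `choose_mul_le` beats the number of choices for the remaining data, all
measured as powers of two. -/
lemma card_dense_small {k L s m q K ℓ q' : ℕ} [NeZero k] (hk : 2 ≤ k) (hs : 0 < s) (hK : 6 * q ≤ K * s ^ 2)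
    (hsl : s ≤ 2 ^ ℓ) (hM : L * s ≤ 2 ^ (4 * ℓ))
    (Φ : Finset (Fin q → Fin L × Fin s)) (hΦ : ∀ φ ∈ Φ, Function.Injective φ)
    (hΦc : Φ.card ≤ (L * s) ^ q')
    (hexp : 2 + k * ℓ + k + 8 * ℓ * m + 4 * ℓ * q' ≤ m * K) :
    (univ.filter (HasDenseMatching (k := k) (m := m) K Φ)).card * (4 * s ^ k) ≤
        s ^ Fintype.card ((ZMod k × (Fin L × Fin s)) × Fin L) := by
  have h1 := card_dense_le (k := k) (m := m) hk K Φ hΦ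
  set X := (univ.filter (HasDenseMatching (k := k) (m := m) K Φ)).card
  set Z := s ^ Fintype.card ((ZMod k × (Fin L × Fin s)) × Fin L)
  have h2 := choose_mul_le hK
  have h3 : X * 2 ^ (m * K) ≤ k * ((L * s) ^ m * ((L * s) ^ m * Φ.card)) * Z := by
    refine Nat.le_of_mul_le_mul_left ?_ (show 0 < s ^ (2 * (m * K)) by positivity)
    calc s ^ (2 * (m * K)) * (X * 2 ^ (m * K))
        = X * s ^ (2 * (m * K)) * 2 ^ (m * K) := by ring
      _ ≤ (k * ((L * s) ^ m * ((L * s) ^ m * (Φ.card * (q.choose K) ^ m)))) * Z * 2 ^ (m * K) := by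
          gcongr
      _ = (k * ((L * s) ^ m * ((L * s) ^ m * Φ.card))) * Z * (q.choose K * 2 ^ K) ^ m := by
          rw [mul_pow (q.choose K), ← pow_mul 2 K m, mul_comm K m]; ring
      _ ≤ (k * ((L * s) ^ m * ((L * s) ^ m * Φ.card))) * Z * (s ^ (2 * K)) ^ m := by gcongr
      _ = _ := by rw [← pow_mul, show 2 * K * m = 2 * (m * K) by ring]; ring
  have h4 : 4 * s ^ k * (k * ((L * s) ^ m * ((L * s) ^ m * Φ.card))) ≤ 2 ^ (m * K) := by
    calc _ ≤ 2 ^ 2 * (2 ^ ℓ) ^ k * (2 ^ k * ((2 ^ (4 * ℓ)) ^ m * ((2 ^ (4 * ℓ)) ^ m *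
            (2 ^ (4 * ℓ)) ^ q'))) := by
          gcongr
          · norm_num
          · exact Nat.lt_two_pow_self.le
          · exact hΦc.trans (Nat.pow_le_pow_left hM _)
      _ = 2 ^ (2 + k * ℓ + k + 8 * ℓ * m + 4 * ℓ * q') := by
          simp only [← pow_mul, ← pow_add]
          congr 1; ring
      _ ≤ _ := Nat.pow_le_pow_right (by norm_num) hexp
  refine Nat.le_of_mul_le_mul_left ?_ (show 0 < 2 ^ (m * K) by positivity)
  calc 2 ^ (m * K) * (X * (4 * s ^ k)) = 4 * s ^ k * (X * 2 ^ (m * K)) := by ring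
    _ ≤ 4 * s ^ k * (k * ((L * s) ^ m * ((L * s) ^ m * Φ.card)) * Z) := by gcongr
    _ = 4 * s ^ k * (k * ((L * s) ^ m * ((L * s) ^ m * Φ.card))) * Z := by ring
    _ ≤ _ := by gcongr

/-! ### The host hypergraph and the size-Ramsey bound -/

set_option maxHeartbeats 4000000 in
/-- A `k`-uniform `H` with at most `6 * L ^ k` edges, where `L = 96 * k ^ 3 * r * ℓ * s`, all of whose
`r`-colourings have a monochromatic tight path on `n` vertices. In the application `ℓ` is about
`log n` and `s` about `√(n / ℓ)`. -/
lemma exists_arrowing {k r ℓ s n : ℕ} [NeZero k] (hk : 3 ≤ k) (hr : 1 ≤ r) (hℓ : 1 ≤ ℓ) (hs : 1 ≤ s)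
    (hn : n ≤ 2 * k ^ 2 * ℓ * s ^ 2) (hsl : s ≤ 2 ^ ℓ)
    (hM : 96 * k ^ 3 * r * ℓ * s * s ≤ 2 ^ (4 * ℓ)) :
    ∃ H : Finset (Finset (ZMod k × (Fin (96 * k ^ 3 * r * ℓ * s) × Fin s))),
      (∀ e ∈ H, e.card = k) ∧ H.card ≤ 6 * (96 * k ^ 3 * r * ℓ * s) ^ k ∧
      ∀ χ : Finset (ZMod k × (Fin (96 * k ^ 3 * r * ℓ * s) × Fin s)) → Fin r,
        ∃ (y : ℕ → _) (c : Fin r), IsTightPath k (H.filter fun e => χ e = c) y n := by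
  classical
  -- `q = 4 * k ^ 2 * m` bounds the path together with the vertices discarded in `k * m` rounds;
  -- `K` is such that `6 * q = K * s ^ 2`, as `choose_mul_le` asks; `μ` makes `L * L = L * (μ * s)` exceed
  -- the shadow bound `k * L * s` by the factor `4 * r * K`.
  obtain ⟨K, hK⟩ : ∃ K, K = 24 * k ^ 2 * ℓ := ⟨_, rfl⟩
  obtain ⟨μ, hμ⟩ : ∃ μ, μ = 4 * k * r * K := ⟨_, rfl⟩
  obtain ⟨q, hq⟩ : ∃ q, q = 4 * k ^ 2 * (ℓ * s ^ 2) := ⟨_, rfl⟩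
  obtain ⟨m, hm⟩ : ∃ m, m = ℓ * s ^ 2 := ⟨_, rfl⟩
  obtain ⟨L, hL⟩ : ∃ L, L = 96 * k ^ 3 * r * ℓ * s := ⟨_, rfl⟩
  rw [← hL] at hM ⊢
  have hLμ : L = μ * s := by rw [hL, hμ, hK]; ring
  have hqK : 6 * q = K * s ^ 2 := by rw [hq, hK]; ring
  have hK0 : 0 < K := by rw [hK]; positivity
  have hμ0 : 0 < μ := by rw [hμ]; positivity
  have hL0 : 0 < L := by rw [hLμ]; positivity
  have hm1 : 1 ≤ m := by rw [hm]; exact Nat.mul_pos hℓ (by positivity)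
  have hqLs : q ≤ L * s := by
    rw [hLμ, hμ]
    have : 1 * (K * s ^ 2) ≤ (4 * k * r) * (K * s ^ 2) :=
      Nat.mul_le_mul_right _ (by nlinarith)
    nlinarith
  have : NeZero L := ⟨hL0.ne'⟩
  have : NeZero s := ⟨by omega⟩
  have hcardV : Fintype.card (Fin L × Fin s) = L * s := by simp
  let e : Fin (L * s) ≃ Fin L × Fin s := (Fintype.equivFinOfCardEq hcardV).symm
  let Φ₂ : Finset (Fin q → Fin L × Fin s) := univ.filter Function.Injective
  -- Codegrees above `6 * μ`: one pair, with the whole part in the role of the `q`-set.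
  have hA := card_dense_small (k := k) (m := 1) (K := 6 * μ) (ℓ := ℓ) (q' := 0) (by omega) hs
    (by rw [hLμ]; ring_nf; rfl) hsl hM {(e : Fin (L * s) → Fin L × Fin s)}
    (by intro φ hφ; rw [mem_singleton.1 hφ]; exact e.injective) (by simp)
    (by
      rw [hμ, hK]
      have : 1 * (k ^ 3 * ℓ) ≤ r * (k ^ 3 * ℓ) := Nat.mul_le_mul_right _ hr
      have h3 : 27 ≤ k ^ 3 := Nat.pow_le_pow_left hk 3
      have h4 : k ≤ k ^ 3 := Nat.le_self_pow (by norm_num) k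
      nlinarith)
  -- Matchings of `m` pairs with `K` common neighbours each in an arbitrary `q`-set.
  have hB := card_dense_small (k := k) (m := m) (K := K) (ℓ := ℓ) (q' := q) (by omega) hs
    hqK.le hsl hM Φ₂ (fun φ hφ => (mem_filter.1 hφ).2)
    ((card_le_univ _).trans (by simp))
    (by
      rw [hq, hK, ← hm]
      have h1 : 1 * ℓ ≤ m * ℓ := Nat.mul_le_mul_right _ hm1
      have h2 : 3 * k ≤ k ^ 2 := by nlinarith
      have h3 : 1 * k ≤ ℓ * k := Nat.mul_le_mul_right _ hℓ
      have h4 : k * ℓ ≤ k * (m * ℓ) := Nat.mul_le_mul_left _ (by omega)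
      have h5 : 3 * k * (m * ℓ) ≤ k ^ 2 * (m * ℓ) := Nat.mul_le_mul_right _ h2
      have h6 : 9 * (m * ℓ) ≤ k ^ 2 * (m * ℓ) := Nat.mul_le_mul_right _ (by nlinarith)
      nlinarith)
  obtain ⟨ω, hω, hcyc⟩ := exists_many_cycles (k := k) (L := L) (s := s) hs
    (fun ω => HasDenseMatching (m := 1) (6 * μ) {(e : Fin (L * s) → Fin L × Fin s)} ω ∨
      HasDenseMatching (m := m) K Φ₂ ω) (by
      rw [filter_or]
      calc _ ≤ (#(univ.filter fun ω => HasDenseMatching (k := k) (m := 1) (6 * μ)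
              {(e : Fin (L * s) → Fin L × Fin s)} ω) +
              #(univ.filter fun ω => HasDenseMatching (k := k) (m := m) K Φ₂ ω)) * (2 * s ^ k) :=
            Nat.mul_le_mul_right _ (card_union_le _ _)
        _ ≤ _ := by nlinarith)
  rw [not_or] at hω
  obtain ⟨hωA, hωB⟩ := hω
  have hcod : ∀ a u v, (univ.filter fun x => Adj ω a u x ∧ Adj ω (a + 1) x v).card ≤ 6 * μ := by
    intro a u v
    by_contra! hlt
    have h2 : (univ.filter fun x => Adj ω a u x ∧ Adj ω (a + 1) x v) =
        (univ.filter fun i => Adj ω a u (e i) ∧ Adj ω (a + 1) (e i) v).image e := by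
      ext x
      simp only [mem_filter, mem_univ, true_and, mem_image]
      constructor
      · intro h; exact ⟨e.symm x, by simpa using h, by simp⟩
      · rintro ⟨i, h, rfl⟩; exact h
    rw [h2] at hlt
    obtain ⟨Y, hY, hYc⟩ := exists_subset_card_eq (hlt.le.trans card_image_le)
    exact hωA ⟨a, fun _ => u, fun _ => v, e, fun _ => Y, Function.injective_of_subsingleton _,
      Function.injective_of_subsingleton _, by simp, fun _ => hYc,
      fun _ i hi => (mem_filter.1 (hY hi)).2⟩
  have hk2 : 2 ≤ k := by omega
  have hLk : L ^ k = L ^ (k - 2) * (L * L) := by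
    rw [← pow_two, ← pow_add]; congr 1; omega
  refine ⟨cycleHypergraph ω, uniform_cycleHypergraph, ?_, ?_⟩
  · rw [card_cycleHypergraph]
    refine (card_cycles_le hk2 hcod).trans (le_of_eq ?_)
    rw [hLk, hLμ]; ring
  · intro χ
    refine mono_tightPath (q := q) (m := k * m) (K := K) (Δ := q * (6 * μ * L ^ (k - 2))) hk2 _
      uniform_cycleHypergraph ?_ ?_ ?_ ?_ χ
    · rw [hq, hm]; nlinarith
    · intro Q hQ
      exact (cycles_touching_le hk2 hcod Q).trans (Nat.mul_le_mul_right _ hQ)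
    · rw [card_cycleHypergraph]
      have hsh := card_shadow_le (ω := ω) hk2
      rw [hLk] at hcyc
      have h1 : 4 * (r * (K * (k * (L * s)))) = L * L := by
        nth_rewrite 2 [hLμ]; rw [hμ]; ring
      have h2 : 4 * k * (r * (q * (6 * μ))) = L * L := by
        calc _ = 4 * k * r * (6 * q) * μ := by ring
          _ = _ := by rw [hqK, hLμ, hμ]; ring
      have h3 : 2 * (r * (K * (k * (L * s)) + q * (6 * μ))) < L * L := by
        have : 0 < L * L := by positivity
        have : 3 * (r * (q * (6 * μ))) ≤ k * (r * (q * (6 * μ))) := Nat.mul_le_mul_right _ hk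
        nlinarith
      have hX : 0 < L ^ (k - 2) := by positivity
      have h4 : 2 * (r * (K * (k * (L * s)) + q * (6 * μ))) * L ^ (k - 2) <
          L * L * L ^ (k - 2) := (Nat.mul_lt_mul_right hX).2 h3
      have h5 : r * (K * (cycleHypergraph ω).shadow.card + q * (6 * μ * L ^ (k - 2))) ≤
          r * (K * (k * (L * s) * L ^ (k - 2)) + q * (6 * μ * L ^ (k - 2))) := by gcongr
      nlinarith
    · intro 𝒯 Q h𝒯 hpd hsub hQ
      refine no_dead_matching hk2 hqLs ?_ 𝒯 Q h𝒯 hpd hsub hQ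
      intro a u v φ Y hu hv hφ hY h
      exact hωB ⟨a, u, v, φ, Y, hu, hv, by simp [Φ₂, hφ], hY, h⟩

/-- A host on any finite vertex type bounds the size-Ramsey number, after numbering its vertices; the
paths counted from `0` here are shifted to vertex set `{1, ..., n}`. -/
lemma sizeRamsey_le {W : Type*} [DecidableEq W] [Fintype W] {k n r B : ℕ} (hkn : k ≤ n)
    (H : Finset (Finset W)) (hH : ∀ e ∈ H, e.card = k) (hB : H.card ≤ B)
    (hχ : ∀ χ : Finset W → Fin r,
      ∃ (y : ℕ → W) (c : Fin r), IsTightPath k (H.filter fun e => χ e = c) y n) :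
    sizeRamsey k (Finset.Icc 1 n) (tightPathEdges k n) r ≤ B := by
  let g : W → ℕ := fun w => (Fintype.equivFin W w : ℕ)
  have hg : Function.Injective g := Fin.val_injective.comp (Fintype.equivFin W).injective
  refine le_trans (Nat.sInf_le ⟨H.image fun e => e.image g, ?_, rfl, ?_⟩) (card_image_le.trans hB)
  · intro e' he'
    obtain ⟨e, he, rfl⟩ := mem_image.1 he'
    rw [card_image_of_injective _ hg, hH e he]
  · intro χ
    obtain ⟨y, c, hy⟩ := hχ fun e => χ (e.image g)
    refine ⟨fun i => g (y (i - 1)), ?_, c, ?_⟩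
    · intro i hi j hj hij
      simp only [coe_Icc, Set.mem_Icc] at hi hj
      have := hy.1 (show i - 1 ∈ Set.Iio n by simp; omega) (show j - 1 ∈ Set.Iio n by simp; omega)
        (hg hij)
      omega
    · intro e he
      obtain ⟨i, hi, rfl⟩ := mem_image.1 he
      rw [mem_Icc] at hi
      have himg : (Icc i (i + k - 1)).image (fun i => g (y (i - 1))) =
          ((Ico (i - 1) (i - 1 + k)).image y).image g := by
        have : Ico (i - 1) (i - 1 + k) = (Icc i (i + k - 1)).image fun i => i - 1 := by
          ext j
          simp only [mem_Ico, mem_image, mem_Icc]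
          constructor
          · intro h; exact ⟨j + 1, by omega, by omega⟩
          · rintro ⟨a, ha, rfl⟩; omega
        rw [this, image_image, image_image]; rfl
      obtain ⟨h1, h2⟩ := mem_filter.1 (hy.2 (i - 1) (by omega))
      simp only [himg]
      exact ⟨mem_image_of_mem _ h1, h2⟩

/-- For every `k ≥ 3` there is a constant `C > 0` such that for every `r ≥ 2` and all
sufficiently large `n`, `R̂(P^{(k)}_{n,k-1}, r) ≤ C · r^k · (n log n)^{k/2}`. -/
theorem sizeRamsey_tightPath (k : ℕ) (hk : 3 ≤ k) :
    ∃ C : ℝ, 0 < C ∧ ∀ r : ℕ, 2 ≤ r → ∃ N : ℕ, ∀ n : ℕ, N ≤ n →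
      (sizeRamsey k (Finset.Icc 1 n) (tightPathEdges k n) r : ℝ)
        ≤ C * (r : ℝ) ^ k * ((n : ℝ) * Real.log n) ^ ((k : ℝ) / 2) := by
  have : NeZero k := ⟨by omega⟩
  refine ⟨6 * (384 * (k : ℝ) ^ 3) ^ k, by positivity, fun r hr => ⟨384 * k ^ 3 * r + 4 + k, fun n hn => ?_⟩⟩
  obtain ⟨t, ht⟩ : ∃ t, t = Nat.log 2 n := ⟨_, rfl⟩
  obtain ⟨ℓ, hℓ⟩ : ∃ ℓ, ℓ = t + 1 := ⟨_, rfl⟩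
  obtain ⟨x, hx⟩ : ∃ x, x = n / ℓ := ⟨_, rfl⟩
  obtain ⟨s, hs⟩ : ∃ s, s = Nat.sqrt x + 1 := ⟨_, rfl⟩
  have hn4 : 4 ≤ n := by omega
  have hnl : n < 2 ^ ℓ := by rw [hℓ, ht]; exact Nat.lt_pow_succ_log_self (by norm_num) n
  have htn : 2 ^ t ≤ n := by rw [ht]; exact Nat.pow_log_le_self 2 (by omega)
  have hℓn : ℓ ≤ n := by
    have := Nat.lt_two_pow_self (n := t)
    omega
  have hx1 : 1 ≤ x := by rw [hx]; exact (Nat.one_le_div_iff (by omega)).2 hℓn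
  have hsq1 : 1 ≤ Nat.sqrt x := Nat.sqrt_pos.2 hx1
  have hsx : s ^ 2 ≤ 4 * x := by
    have := Nat.sqrt_le' x
    rw [hs]; nlinarith
  have hlx : ℓ * x ≤ n := by rw [hx]; exact Nat.mul_div_le n ℓ
  have hls : ℓ * s ^ 2 ≤ 4 * n := by nlinarith
  have hnls : n ≤ ℓ * s ^ 2 := by
    have h1 : x + 1 ≤ s ^ 2 := by rw [hs]; exact Nat.lt_succ_sqrt' x
    have h2 : n < ℓ * (x + 1) := by rw [hx]; exact Nat.lt_mul_div_succ n (by omega)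
    exact h2.le.trans (Nat.mul_le_mul_left _ h1)
  have hsn : s ≤ n := by
    have : x ≤ n := by rw [hx]; exact Nat.div_le_self _ _
    nlinarith
  have hMn : 96 * k ^ 3 * r * ℓ * s * s ≤ n ^ 2 := by
    calc 96 * k ^ 3 * r * ℓ * s * s = 96 * k ^ 3 * r * (ℓ * s ^ 2) := by ring
      _ ≤ 96 * k ^ 3 * r * (4 * n) := by gcongr
      _ = 384 * k ^ 3 * r * n := by ring
      _ ≤ n * n := Nat.mul_le_mul_right _ (by omega)
      _ = _ := by ring
  obtain ⟨H, hH, hHc, hχ⟩ := exists_arrowing (k := k) (r := r) (ℓ := ℓ) (s := s) (n := n) hk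
    (by omega) (by omega) (by omega)
    (hnls.trans (by
      have : 1 * (ℓ * s ^ 2) ≤ (2 * k ^ 2) * (ℓ * s ^ 2) := Nat.mul_le_mul_right _ (by nlinarith)
      nlinarith))
    (hsn.trans hnl.le)
    (hMn.trans (by
      calc n ^ 2 ≤ (2 ^ ℓ) ^ 2 := Nat.pow_le_pow_left hnl.le _
        _ = 2 ^ (2 * ℓ) := by rw [← pow_mul, mul_comm]
        _ ≤ _ := Nat.pow_le_pow_right (by norm_num) (by omega)))
  have hle := sizeRamsey_le (by omega) H hH hHc hχ
  -- `Nat.log` is taken to base 2, and the rounding up costs at most `log n / (2 * log 2)` as `n ≥ 4`.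
  have hlog : (ℓ : ℝ) ≤ 3 * Real.log n := by
    have h2 := Real.log_two_gt_d9
    have hn0 : (0 : ℝ) < n := by positivity
    have h4 : 2 * Real.log 2 ≤ Real.log n := by
      rw [← Real.log_rpow (by norm_num)]
      apply Real.log_le_log (by norm_num)
      norm_num; exact hn4
    have h5 : t * Real.log 2 ≤ Real.log n := by
      rw [← Real.log_pow]
      apply Real.log_le_log (by positivity)
      exact_mod_cast htn
    rw [hℓ]; push_cast
    have : (0 : ℝ) ≤ t := by positivity
    nlinarith
  have hlog0 : 0 ≤ Real.log n := Real.log_natCast_nonneg n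
  set A : ℝ := n * Real.log n with hA
  have hA0 : 0 ≤ A := by positivity
  have hL2 : ((96 * k ^ 3 * r * ℓ * s : ℕ) : ℝ) ≤ 384 * (k : ℝ) ^ 3 * r * √A := by
    refine (sq_le_sq₀ (by positivity) (by positivity)).1 ?_
    rw [mul_pow _ (√A), Real.sq_sqrt hA0]
    have hls' : (ℓ : ℝ) * s ^ 2 ≤ 4 * n := by exact_mod_cast hls
    push_cast
    calc (96 * (k : ℝ) ^ 3 * r * ℓ * s) ^ 2 = (96 * (k : ℝ) ^ 3 * r) ^ 2 * (ℓ * (ℓ * s ^ 2)) := by ring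
      _ ≤ (96 * (k : ℝ) ^ 3 * r) ^ 2 * (3 * Real.log n * (4 * n)) := by gcongr
      _ = (96 * (k : ℝ) ^ 3 * r) ^ 2 * 12 * A := by rw [hA]; ring
      _ ≤ (96 * (k : ℝ) ^ 3 * r) ^ 2 * 16 * A := by gcongr; norm_num
      _ = _ := by ring
  have hAk : A ^ ((k : ℝ) / 2) = √A ^ k := by
    rw [Real.sqrt_eq_rpow, ← Real.rpow_natCast, ← Real.rpow_mul hA0]
    congr 1; ring
  calc (sizeRamsey k (Finset.Icc 1 n) (tightPathEdges k n) r : ℝ)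
      ≤ ((6 * (96 * k ^ 3 * r * ℓ * s) ^ k : ℕ) : ℝ) := by exact_mod_cast hle
    _ = 6 * ((96 * k ^ 3 * r * ℓ * s : ℕ) : ℝ) ^ k := by push_cast; ring
    _ ≤ 6 * (384 * (k : ℝ) ^ 3 * r * √A) ^ k := by gcongr
    _ = _ := by rw [hAk, mul_pow, mul_pow]; ring
end

section
/- For all integers k ≥ 3 and 1 ≤ l ≤ k-1 there exists a constant C > 0 (depending only on k) such that for every integer r ≥ 2 there exists N such that for all n ≥ N with n ≡ l (mod k-l), the r-color size-Ramsey number of the l-path satisfies R̂(P^{(k)}_{n,l}, r) ≤ C · r^k · (n · log n)^{k/2}. -/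
/-!
Deleting edges of the tight path (consecutive edges meet in `k - 1` vertices) on `n` vertices leaves
the `l`-path on `n` vertices, so it suffices to find a host hypergraph with
`O(r ^ k (n log n) ^ (k / 2))` edges, every `r`-colouring of which has a monochromatic tight path
with `n` vertices.

**The host.** Take `k` vertex classes of size `M = A r n`, with `A` depending on `k` only, and
join any two vertices from different classes independently with probability `1 / q`, where
`M / q ^ (k - 1)` is of order `r log n`. The edges of the host are the `k`-cliques of this random
`k`-partite graph. A Chernoff bound and a union bound (`exists_good`) give a graph with two
properties, in which `d` is of order `log n`:

* `RegularNb`: any set of `s < k` vertices avoiding a class has between `M / (2 q ^ s)` and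
  `2 M / q ^ s` common neighbours in that class;
* `NoDenseSpot`: for a small subset `W` of a class, there are no `t` pairwise disjoint
  `(k - 1)`-sets, all avoiding that class and each having at least `d` common neighbours in `W`.

Building cliques one vertex at a time, `RegularNb` bounds the number of edges by
`∏ j < k, 2 M / q ^ j = (4 M * (M / q ^ (k - 1))) ^ (k / 2)`, which is of the desired order
(`card_host`, `prod_sq`). It also bounds the vertex degrees (`deg_host`) and the size of the
shadow (`shadow_card_host`).

**The tight path.** In a colouring of the host, take a most frequent colour and delete its edges
until every `(k - 1)`-set still in the shadow lies in at least `d` of the remaining edges; by the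
shadow bound at least half of the colour class survives (`clean`). Grow a tight path greedily,
and let `W` be the set of visited vertices. When the path cannot be extended outside `W`, discard its
last `k - 1` vertices: they form a `(k - 1)`-set all of whose extensions lie in `W`. If the path
becomes too short, restart with an edge disjoint from `W`, which exists by the degree bound
(`trash`). If no path reaches `n` vertices, this goes on until `k t` disjoint `(k - 1)`-sets are
discarded, while `W` has remained small. Each of them avoids exactly one class, so `t` of them
avoid the same class, and each of these has at least `d` common neighbours in `W`. This contradicts
`NoDenseSpot`. The argument is carried out in `exists_mono_path` and `host_mono_path`.
-/

open Finset

/-- The edge set of the `k`-uniform `l`-path on vertex set `{1, ..., n}` (for `n ≡ l (mod k-l)`):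
the edges are `e_i = {(i-1)(k-l)+1, ..., (i-1)(k-l)+k}` for `1 ≤ i ≤ (n-l)/(k-l)`. -/
def lPathEdges (k l n : ℕ) : Finset (Finset ℕ) :=
  (Finset.Icc 1 ((n - l) / (k - l))).image
    (fun i => Finset.Icc ((i - 1) * (k - l) + 1) ((i - 1) * (k - l) + k))

namespace LPath

/-! ### Large deviations for random functions

The uniform measure on functions `g : E → Fin q` is used in the form of counting. An element `e`
is selected when `g e = 0`, so that elements are selected independently with probability `1 / q`.
-/

lemma card_zero_on {E : Type*} [Fintype E] [DecidableEq E] (q : ℕ) [NeZero q] (B : Finset E) :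
    ((univ.filter (fun g : E → Fin q => ∀ e ∈ B, g e = 0)).card : ℝ) * (q : ℝ) ^ B.card
      = (q : ℝ) ^ Fintype.card E := by
  have h : (univ.filter (fun g : E → Fin q => ∀ e ∈ B, g e = 0))
      = Fintype.piFinset (fun e => if e ∈ B then ({0} : Finset (Fin q)) else univ) := by
    ext g
    simp only [mem_filter, mem_univ, true_and, Fintype.mem_piFinset]
    refine forall_congr' fun e => ?_
    by_cases he : e ∈ B <;> simp [he]
  have h2 : (univ.filter (fun g : E → Fin q => ∀ e ∈ B, g e = 0)).card
      = q ^ (univ \ B).card := by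
    rw [h, Fintype.card_piFinset]
    have : ∀ e : E, (if e ∈ B then ({0} : Finset (Fin q)) else univ).card
        = if e ∈ univ \ B then q else 1 := by
      intro e
      by_cases he : e ∈ B <;> simp [he]
    simp only [this]
    rw [Finset.prod_ite_mem, univ_inter, prod_const]
  rw [h2]
  push_cast
  rw [← pow_add, card_sdiff_add_card_eq_card (subset_univ B), card_univ]

/-- The generating function of the number of indices `i ∈ I` whose set `A i` is entirely selected.
The sets `A i` are disjoint of size `a`, so this number is binomial with parameters `I.card` and
`1 / q ^ a`. The expectation is multiplied by the number `q ^ card E` of functions. -/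
lemma mgf {E ι : Type*} [Fintype E] [DecidableEq E] (q a : ℕ) [NeZero q]
    (I : Finset ι) (A : ι → Finset E) (hA : ∀ i ∈ I, (A i).card = a)
    (hd : (I : Set ι).PairwiseDisjoint A) (z : ℝ) :
    ∑ g : E → Fin q, z ^ (I.filter (fun i => ∀ e ∈ A i, g e = 0)).card
      = (q : ℝ) ^ Fintype.card E * (1 + (z - 1) / (q : ℝ) ^ a) ^ I.card := by
  classical
  have hq : (q : ℝ) ≠ 0 := by exact_mod_cast NeZero.ne q
  have h1 : ∀ g : E → Fin q, z ^ (I.filter (fun i => ∀ e ∈ A i, g e = 0)).card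
      = ∑ J ∈ I.powerset, (z - 1) ^ J.card * (if ∀ e ∈ J.biUnion A, g e = 0 then 1 else 0) := by
    intro g
    have : z ^ (I.filter (fun i => ∀ e ∈ A i, g e = 0)).card
        = ∏ i ∈ I, (1 + if ∀ e ∈ A i, g e = 0 then z - 1 else 0) := by
      rw [← prod_const, prod_filter]
      refine prod_congr rfl fun i _ => ?_
      split_ifs <;> ring
    rw [this, Finset.prod_one_add]
    refine sum_congr rfl fun J _ => ?_
    rw [prod_ite_zero, prod_const]
    have : (∀ i ∈ J, ∀ e ∈ A i, g e = 0) ↔ ∀ e ∈ J.biUnion A, g e = 0 := by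
      simp only [mem_biUnion]
      exact ⟨fun h e ⟨i, hi, he⟩ => h i hi e he, fun h i hi e he => h e ⟨i, hi, he⟩⟩
    simp only [this]
    split_ifs <;> simp
  simp only [h1]
  rw [sum_comm]
  have h2 : ∀ J ∈ I.powerset, ∑ g : E → Fin q,
      (z - 1) ^ J.card * (if ∀ e ∈ J.biUnion A, g e = 0 then (1 : ℝ) else 0)
      = (q : ℝ) ^ Fintype.card E * ((z - 1) / (q : ℝ) ^ a) ^ J.card := by
    intro J hJ
    rw [mem_powerset] at hJ
    have hc : (J.biUnion A).card = a * J.card := by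
      rw [card_biUnion (fun i hi j hj hij => hd (hJ hi) (hJ hj) hij),
        sum_congr rfl (fun i hi => hA i (hJ hi))]
      simp [mul_comm]
    have := card_zero_on q (J.biUnion A)
    rw [hc] at this
    rw [← mul_sum, sum_boole, ← this, div_pow, ← pow_mul]
    field_simp
  rw [sum_congr rfl h2, ← mul_sum]
  congr 1
  rw [add_comm, ← Finset.sum_pow_mul_eq_add_pow]
  simp

/-- Exponential Markov inequality for the binomial variable of `mgf`. Taking `z > 1` bounds the
upper tail, `z < 1` the lower tail. -/
lemma markov {E ι : Type*} [Fintype E] [DecidableEq E] (q a : ℕ) [NeZero q]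
    (I : Finset ι) (A : ι → Finset E) (hA : ∀ i ∈ I, (A i).card = a)
    (hd : (I : Set ι).PairwiseDisjoint A) (z b : ℝ) (hz : 0 < z)
    (P : (E → Fin q) → Prop) [DecidablePred P]
    (hP : ∀ g, P g → Real.exp b ≤ z ^ (I.filter (fun i => ∀ e ∈ A i, g e = 0)).card) :
    ((univ.filter P).card : ℝ)
      ≤ (q : ℝ) ^ Fintype.card E * Real.exp ((z - 1) * (I.card / (q : ℝ) ^ a) - b) := by
  have hq : (1 : ℝ) ≤ q := by exact_mod_cast NeZero.one_le
  have hq1 : (1 : ℝ) ≤ (q : ℝ) ^ a := one_le_pow₀ hq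
  have h1 : ((univ.filter P).card : ℝ) * Real.exp b
      ≤ (q : ℝ) ^ Fintype.card E * (1 + (z - 1) / (q : ℝ) ^ a) ^ I.card := by
    rw [← mgf q a I A hA hd z, ← nsmul_eq_mul]
    refine (card_nsmul_le_sum _ _ _ (fun g hg => hP g (mem_filter.1 hg).2)).trans ?_
    exact sum_le_sum_of_subset_of_nonneg (subset_univ _) (fun g _ _ => by positivity)
  have h2 : (1 + (z - 1) / (q : ℝ) ^ a) ^ I.card
      ≤ Real.exp ((z - 1) * (I.card / (q : ℝ) ^ a)) := by
    have h0 : 0 ≤ 1 + (z - 1) / (q : ℝ) ^ a := by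
      have : (z - 1) / (q : ℝ) ^ a ≥ -1 := by
        rw [ge_iff_le, le_div_iff₀ (by linarith)]; linarith
      linarith
    calc (1 + (z - 1) / (q : ℝ) ^ a) ^ I.card
        ≤ (Real.exp ((z - 1) / (q : ℝ) ^ a)) ^ I.card := by
          gcongr; rw [add_comm]; exact Real.add_one_le_exp _
      _ = _ := by rw [← Real.exp_nat_mul]; congr 1; ring
  rw [Real.exp_sub, mul_div_assoc', le_div_iff₀ (Real.exp_pos b)]
  exact h1.trans (by gcongr)

/-! ### The random `k`-partite graph

The vertex set is `Fin k × Fin M`, the first coordinate being the class. A graph is encoded by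
`g : Sym2 (Fin k × Fin M) → Fin q`, the adjacent pairs being those with `g = 0`. The values of `g`
on the diagonal and inside a class play no role.
-/

/-- The common neighbours of the vertices of `S` in class `i`, as a subset of `Fin M`. -/
def nb {k M q : ℕ} [NeZero q] (g : Sym2 (Fin k × Fin M) → Fin q) (S : Finset (Fin k × Fin M))
    (i : Fin k) : Finset (Fin M) :=
  univ.filter (fun y => ∀ x ∈ S, g s((i, y), x) = 0)

/-- Exponential Markov inequality for the number of pairs `(τ, y)` such that `y ∈ W` is a common
neighbour in class `i` of `τ ∈ T`. Since the sets `τ` are disjoint and avoid class `i`, different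
pairs depend on disjoint sets of graph edges, hence are independent. -/
lemma tail {k M q : ℕ} [NeZero q] (a : ℕ) (i : Fin k) (W : Finset (Fin M))
    (T : Finset (Finset (Fin k × Fin M))) (hTa : ∀ τ ∈ T, τ.card = a)
    (hTi : ∀ τ ∈ T, ∀ x ∈ τ, x.1 ≠ i) (hTd : (T : Set (Finset (Fin k × Fin M))).PairwiseDisjoint id)
    (z b : ℝ) (hz : 0 < z) (P : (Sym2 (Fin k × Fin M) → Fin q) → Prop) [DecidablePred P]
    (hP : ∀ g, P g → Real.exp b ≤ z ^ (∑ τ ∈ T, (nb g τ i ∩ W).card)) :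
    ((univ.filter P).card : ℝ) ≤ (q : ℝ) ^ Fintype.card (Sym2 (Fin k × Fin M)) *
      Real.exp ((z - 1) * ((T.card * W.card : ℕ) / (q : ℝ) ^ a) - b) := by
  classical
  have key := markov (E := Sym2 (Fin k × Fin M)) q a (T ×ˢ W)
    (fun p => p.1.image (fun x => s((i, p.2), x))) ?_ ?_ z b hz P ?_
  · rwa [card_product] at key
  · rintro ⟨τ, y⟩ hp
    rw [mem_product] at hp
    rw [card_image_of_injective _ (fun x x' h => Sym2.congr_right.1 h)]
    exact hTa _ hp.1
  · rintro ⟨τ, y⟩ hp ⟨τ', y'⟩ hp' hne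
    simp only [coe_product, Set.mem_prod, mem_coe] at hp hp'
    rw [Function.onFun, disjoint_left]
    intro e he he'
    simp only [mem_image] at he he'
    obtain ⟨x, hx, rfl⟩ := he
    obtain ⟨x', hx', h⟩ := he'
    rw [Sym2.eq_iff] at h
    rcases h with ⟨h1, h2⟩ | ⟨h1, h2⟩
    · subst h2
      have : y' = y := by simpa using h1
      subst this
      apply hne
      have : τ = τ' := by
        by_contra hc
        exact disjoint_left.1 (hTd hp.1 hp'.1 hc) hx hx'
      rw [this]
    · exact hTi τ hp.1 x hx (by rw [← h1])
  · intro g hg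
    convert hP g hg using 2
    rw [card_filter, sum_product]
    refine sum_congr rfl fun τ _ => ?_
    rw [← card_filter]
    congr 1
    ext y
    simp only [nb, mem_filter, mem_inter, mem_univ, true_and, mem_image, forall_exists_index, and_imp,
      forall_apply_eq_imp_iff₂]
    tauto

/-- Every set `S` of fewer than `k` vertices that avoids class `i` has, up to a factor `2`, the
expected number `M / q ^ S.card` of common neighbours in class `i`. -/
def RegularNb {k M q : ℕ} [NeZero q] (g : Sym2 (Fin k × Fin M) → Fin q) : Prop :=
  ∀ S : Finset (Fin k × Fin M), S.card < k → ∀ i : Fin k, (∀ x ∈ S, x.1 ≠ i) →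
    (M : ℝ) / (2 * (q : ℝ) ^ S.card) ≤ (nb g S i).card ∧
    ((nb g S i).card : ℝ) ≤ 2 * M / (q : ℝ) ^ S.card

/-- There are no class `i`, subset `W` of it with at most `w` elements, and `t` pairwise disjoint
`(k - 1)`-sets avoiding class `i`, each of which has at least `d` common neighbours in `W`. -/
def NoDenseSpot {k M q : ℕ} [NeZero q] (w t d : ℕ) (g : Sym2 (Fin k × Fin M) → Fin q) : Prop :=
  ∀ (i : Fin k) (W : Finset (Fin M)) (T : Finset (Finset (Fin k × Fin M))), W.card ≤ w →
    T.card = t → (∀ τ ∈ T, τ.card = k - 1) → (∀ τ ∈ T, ∀ x ∈ τ, x.1 ≠ i) →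
    (T : Set (Finset (Fin k × Fin M))).PairwiseDisjoint id →
    ∃ τ ∈ T, (nb g τ i ∩ W).card < d

/-- The functions `g` violating the bounds of `RegularNb` for a given pair `(i, S)` have density at
most `2 exp (-d)`. -/
lemma tail_regular {k M q : ℕ} [NeZero q] (i : Fin k) (S : Finset (Fin k × Fin M))
    (hS : ∀ x ∈ S, x.1 ≠ i) (d : ℝ) (hd : 16 * d ≤ M / (q : ℝ) ^ S.card) :
    ∃ B : Finset (Sym2 (Fin k × Fin M) → Fin q),
      (B.card : ℝ) ≤ (q : ℝ) ^ Fintype.card (Sym2 (Fin k × Fin M)) * (2 * Real.exp (-d)) ∧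
      ∀ g ∉ B, (M : ℝ) / (2 * (q : ℝ) ^ S.card) ≤ (nb g S i).card ∧
        ((nb g S i).card : ℝ) ≤ 2 * M / (q : ℝ) ^ S.card := by
  classical
  have hln1 := Real.log_two_gt_d9
  have hln2 := Real.log_two_lt_d9
  set μ : ℝ := M / (q : ℝ) ^ S.card with hμ
  have hμ0 : 0 ≤ μ := by positivity
  have e1 : (M : ℝ) / (2 * (q : ℝ) ^ S.card) = μ / 2 := by rw [hμ, div_div, mul_comm]
  have e2 : 2 * (M : ℝ) / (q : ℝ) ^ S.card = 2 * μ := by rw [hμ, mul_div_assoc]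
  rw [e1, e2]
  have hlow := tail (q := q) S.card i univ {S} (by simp) (by simpa using hS) (by simp)
    (1 / 2) (-(Real.log 2 * (μ / 2))) (by norm_num) (fun g => ((nb g S i).card : ℝ) < μ / 2) (by
      intro g hg
      rw [sum_singleton, inter_univ]
      have : (1 / 2 : ℝ) ^ (nb g S i).card = Real.exp (-(Real.log 2 * (nb g S i).card)) := by
        rw [one_div, inv_pow, Real.exp_neg, mul_comm, Real.exp_nat_mul, Real.exp_log (by norm_num)]
      rw [this, Real.exp_le_exp]
      nlinarith)
  have hup := tail (q := q) S.card i univ {S} (by simp) (by simpa using hS) (by simp)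
    2 (Real.log 2 * (2 * μ)) (by norm_num) (fun g => 2 * μ < ((nb g S i).card : ℝ)) (by
      intro g hg
      rw [sum_singleton, inter_univ]
      have : (2 : ℝ) ^ (nb g S i).card = Real.exp (Real.log 2 * (nb g S i).card) := by
        rw [mul_comm, Real.exp_nat_mul, Real.exp_log (by norm_num)]
      rw [this, Real.exp_le_exp]
      nlinarith)
  simp only [card_singleton, one_mul, card_univ, Fintype.card_fin, ← hμ] at hlow hup
  refine ⟨univ.filter (fun g => ((nb g S i).card : ℝ) < μ / 2) ∪
    univ.filter (fun g => 2 * μ < ((nb g S i).card : ℝ)), ?_, fun g hg => ?_⟩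
  · refine (Nat.cast_le.2 (card_union_le _ _)).trans ?_
    push_cast
    rw [two_mul (Real.exp _), mul_add]
    refine add_le_add (hlow.trans ?_) (hup.trans ?_)
    · gcongr; nlinarith
    · gcongr; nlinarith
  · simpa [not_or] using hg

/-- The functions `g` violating `NoDenseSpot` for a given triple `(i, W, T)` have density at most
`exp (-(7 / 16) d |T|)`: the total number of common neighbours in `W` would be at least `d |T|`,
while its expectation is at most `d |T| / 4`. -/
lemma tail_dense {k M q : ℕ} [NeZero q] (i : Fin k) (W : Finset (Fin M))
    (T : Finset (Finset (Fin k × Fin M))) (w d : ℕ) (hw : W.card ≤ w)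
    (hTa : ∀ τ ∈ T, τ.card = k - 1) (hTi : ∀ τ ∈ T, ∀ x ∈ τ, x.1 ≠ i)
    (hTd : (T : Set (Finset (Fin k × Fin M))).PairwiseDisjoint id)
    (hwd : (w : ℝ) / (q : ℝ) ^ (k - 1) ≤ d / 4) :
    ∃ B : Finset (Sym2 (Fin k × Fin M) → Fin q),
      (B.card : ℝ) ≤ (q : ℝ) ^ Fintype.card (Sym2 (Fin k × Fin M)) *
        Real.exp (- (7 / 16 * (d * T.card))) ∧
      ∀ g ∉ B, ∃ τ ∈ T, (nb g τ i ∩ W).card < d := by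
  classical
  have hln1 := Real.log_two_gt_d9
  refine ⟨univ.filter (fun g => ∀ τ ∈ T, d ≤ (nb g τ i ∩ W).card), ?_, fun g hg => by
    simpa using hg⟩
  refine (tail (q := q) (k - 1) i W T hTa hTi hTd 2 (Real.log 2 * (d * T.card)) (by norm_num) _
    ?_).trans ?_
  · intro g hg
    have h1 : T.card * d ≤ ∑ τ ∈ T, (nb g τ i ∩ W).card := by
      rw [← smul_eq_mul]; exact card_nsmul_le_sum _ _ _ hg
    calc Real.exp (Real.log 2 * (d * T.card)) = 2 ^ (T.card * d) := by
          rw [mul_comm, show (d : ℝ) * T.card = ((T.card * d : ℕ) : ℝ) by push_cast; ring,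
            Real.exp_nat_mul, Real.exp_log (by norm_num)]
      _ ≤ _ := pow_le_pow_right₀ (by norm_num) h1
  · gcongr
    have h2 : ((T.card * W.card : ℕ) : ℝ) / (q : ℝ) ^ (k - 1) ≤ T.card * (d / 4) := by
      push_cast
      rw [mul_div_assoc]
      refine mul_le_mul_of_nonneg_left (le_trans ?_ hwd) (by positivity)
      gcongr
    have h3 : (0 : ℝ) ≤ d * T.card := by positivity
    nlinarith

/-- A graph with both properties exists, by a union bound over all pairs `(i, S)` and all triples
`(i, W, T)`. There are at most `k M 2 ^ M (k M) ^ (k t)` triples; the factor `2 ^ M` is absorbed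
thanks to `16 M ≤ d t`, the factor `(k M) ^ (k t)` thanks to `8 k log (k M) ≤ d`. -/
lemma exists_good {k M q : ℕ} [NeZero q] (hk : 3 ≤ k) (hM : 1 ≤ M) (w t d : ℕ)
    (h1 : (16 : ℝ) * d ≤ M / (q : ℝ) ^ (k - 1))
    (h2 : 8 * k * Real.log ((k : ℝ) * M) ≤ d)
    (h3 : (w : ℝ) / (q : ℝ) ^ (k - 1) ≤ d / 4)
    (h4 : 16 * M ≤ d * t) :
    ∃ g : Sym2 (Fin k × Fin M) → Fin q, RegularNb g ∧ NoDenseSpot w t d g := by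
  classical
  have hq : (1 : ℝ) ≤ q := by exact_mod_cast NeZero.one_le
  set K : ℕ := k * M with hK
  have hK3 : k ≤ K := Nat.le_mul_of_pos_right _ hM
  set I1 : Finset (Fin k × Finset (Fin k × Fin M)) :=
    (univ ×ˢ (range k).biUnion (fun j => powersetCard j univ)).filter
      (fun p => ∀ x ∈ p.2, x.1 ≠ p.1) with hI1
  set I2 : Finset (Fin k × Finset (Fin M) × Finset (Finset (Fin k × Fin M))) :=
    (univ ×ˢ (univ ×ˢ powersetCard t (powersetCard (k - 1) univ))).filter
      (fun p => p.2.1.card ≤ w ∧ (∀ τ ∈ p.2.2, ∀ x ∈ τ, x.1 ≠ p.1) ∧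
        (p.2.2 : Set (Finset (Fin k × Fin M))).PairwiseDisjoint id) with hI2
  set Q : ℝ := (q : ℝ) ^ Fintype.card (Sym2 (Fin k × Fin M)) with hQ
  have hQ0 : 0 < Q := by positivity
  have hA : ∀ p ∈ I1, ∃ B : Finset (Sym2 (Fin k × Fin M) → Fin q),
      (B.card : ℝ) ≤ Q * (2 * Real.exp (-d)) ∧
      ∀ g ∉ B, (M : ℝ) / (2 * (q : ℝ) ^ p.2.card) ≤ (nb g p.2 p.1).card ∧
        ((nb g p.2 p.1).card : ℝ) ≤ 2 * M / (q : ℝ) ^ p.2.card := by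
    rintro ⟨i, S⟩ hp
    simp only [hI1, mem_filter, mem_product, mem_univ, true_and, mem_biUnion, mem_range,
      mem_powersetCard, subset_univ] at hp
    obtain ⟨⟨j, hj, hSj⟩, hS⟩ := hp
    refine tail_regular i S hS d (h1.trans ?_)
    gcongr
    simp only [hSj]; omega
  have hB : ∀ p ∈ I2, ∃ B : Finset (Sym2 (Fin k × Fin M) → Fin q),
      (B.card : ℝ) ≤ Q * Real.exp (- (7 / 16 * (d * t))) ∧
      ∀ g ∉ B, ∃ τ ∈ p.2.2, (nb g τ p.1 ∩ p.2.1).card < d := by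
    rintro ⟨i, W, T⟩ hp
    simp only [hI2, mem_filter, mem_product, mem_univ, true_and, mem_powersetCard] at hp
    obtain ⟨⟨hT, rfl⟩, hW, hTi, hTd⟩ := hp
    exact tail_dense i W T w d hW (fun τ hτ => (mem_powersetCard.1 (hT hτ)).2) hTi hTd h3
  -- the exceptional sets of functions, for each pair and for each triple
  choose! B1 hB1 hB1' using hA
  choose! B2 hB2 hB2' using hB
  have hc1 : (I1.card : ℝ) ≤ (K : ℝ) * (K * (K : ℝ) ^ k) := by
    have : I1.card ≤ k * (k * K ^ k) := by
      refine (card_filter_le _ _).trans ?_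
      rw [card_product, card_univ, Fintype.card_fin]
      gcongr
      have := card_biUnion_le_card_mul (range k)
        (fun j => powersetCard j (univ : Finset (Fin k × Fin M))) (K ^ k) (by
          intro j hj
          rw [card_powersetCard, card_univ, Fintype.card_prod, Fintype.card_fin, Fintype.card_fin]
          refine (Nat.choose_le_pow _ _).trans ?_
          exact Nat.pow_le_pow_right (by omega) (mem_range.1 hj).le)
      simpa using this
    have h' : I1.card ≤ K * (K * K ^ k) := this.trans (by gcongr)
    exact_mod_cast h'
  have hc2 : (I2.card : ℝ) ≤ (K : ℝ) * (2 ^ M * ((K : ℝ) ^ k) ^ t) := by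
    have : I2.card ≤ k * (2 ^ M * (K ^ k) ^ t) := by
      refine (card_filter_le _ _).trans ?_
      rw [card_product, card_univ, Fintype.card_fin, card_product, card_univ, Fintype.card_finset,
        Fintype.card_fin, card_powersetCard, card_powersetCard, card_univ, Fintype.card_prod,
        Fintype.card_fin, Fintype.card_fin]
      gcongr
      refine (Nat.choose_le_pow _ _).trans ?_
      gcongr
      refine (Nat.choose_le_pow _ _).trans ?_
      exact Nat.pow_le_pow_right (by omega) (by omega)
    have h' : I2.card ≤ K * (2 ^ M * (K ^ k) ^ t) := this.trans (by gcongr)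
    exact_mod_cast h'
  by_contra hcon
  have hcov : (univ : Finset (Sym2 (Fin k × Fin M) → Fin q)) ⊆ I1.biUnion B1 ∪ I2.biUnion B2 := by
    intro g _
    by_contra hg
    simp only [mem_union, mem_biUnion, not_or, not_exists, not_and] at hg
    apply hcon
    refine ⟨g, fun S hS i hi => ?_, fun i W T hW hT hTa hTi hTd => ?_⟩
    · have hm : (i, S) ∈ I1 := by
        simp only [hI1, mem_filter, mem_product, mem_univ, true_and, mem_biUnion, mem_range,
          mem_powersetCard, subset_univ]
        exact ⟨⟨_, hS, rfl⟩, hi⟩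
      exact hB1' _ hm g (hg.1 _ hm)
    · have hm : (i, W, T) ∈ I2 := by
        simp only [hI2, mem_filter, mem_product, mem_univ, true_and, mem_powersetCard]
        exact ⟨⟨fun τ hτ => mem_powersetCard.2 ⟨subset_univ _, hTa τ hτ⟩, hT⟩, hW, hTi, hTd⟩
      exact hB2' _ hm g (hg.2 _ hm)
  have hle : Q ≤ Q * (I1.card * (2 * Real.exp (-d)) + I2.card * Real.exp (- (7 / 16 * (d * t)))) := by
    have h5 : (univ : Finset (Sym2 (Fin k × Fin M) → Fin q)).card
        ≤ ∑ p ∈ I1, (B1 p).card + ∑ p ∈ I2, (B2 p).card :=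
      (card_le_card hcov).trans ((card_union_le _ _).trans
        (add_le_add card_biUnion_le card_biUnion_le))
    have h6 : Q = ((univ : Finset (Sym2 (Fin k × Fin M) → Fin q)).card : ℝ) := by
      rw [card_univ, Fintype.card_fun, Fintype.card_fin, hQ]; push_cast; rfl
    calc Q ≤ ((∑ p ∈ I1, (B1 p).card + ∑ p ∈ I2, (B2 p).card : ℕ) : ℝ) := by
          rw [h6]; exact_mod_cast h5
      _ = ∑ p ∈ I1, ((B1 p).card : ℝ) + ∑ p ∈ I2, ((B2 p).card : ℝ) := by push_cast; rfl
      _ ≤ ∑ p ∈ I1, Q * (2 * Real.exp (-d)) + ∑ p ∈ I2, Q * Real.exp (- (7 / 16 * (d * t))) :=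
          add_le_add (sum_le_sum hB1) (sum_le_sum hB2)
      _ = _ := by simp only [sum_const, nsmul_eq_mul]; ring
  have hge1 : 1 ≤ I1.card * (2 * Real.exp (-d)) + I2.card * Real.exp (- (7 / 16 * ((d:ℝ) * t))) := by
    by_contra h
    push Not at h
    nlinarith
  have hKR : (3 : ℝ) ≤ K := by exact_mod_cast hk.trans hK3
  have hKpos : (0 : ℝ) < K := by linarith
  have hlogK : 1 ≤ Real.log K := by
    rw [Real.le_log_iff_exp_le hKpos]
    have := Real.exp_one_lt_d9
    linarith
  have hKexp : (K : ℝ) = Real.exp (Real.log K) := (Real.exp_log hKpos).symm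
  have h2' : 8 * k * Real.log K ≤ d := by rw [hK]; push_cast; exact h2
  have hkR : (3 : ℝ) ≤ k := by exact_mod_cast hk
  have hd24 : 24 ≤ (d : ℝ) := by nlinarith
  have hMR : (1 : ℝ) ≤ M := by exact_mod_cast hM
  have h4' : 16 * (M : ℝ) ≤ d * t := by exact_mod_cast h4
  have ht : (1 : ℝ) ≤ t := by
    have : t ≠ 0 := by rintro rfl; omega
    exact_mod_cast Nat.one_le_iff_ne_zero.2 this
  have hsm : Real.exp (-1) < 1 / 2 := by
    rw [Real.exp_neg, one_div]
    exact inv_strictAnti₀ (by norm_num) (by have := Real.exp_one_gt_d9; linarith)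
  have b1 : I1.card * (2 * Real.exp (-d)) ≤ Real.exp (-1) := by
    calc I1.card * (2 * Real.exp (-d)) ≤ ((K : ℝ) * (K * (K : ℝ) ^ k)) * (K * Real.exp (-d)) := by
          gcongr; linarith
      _ = Real.exp ((3 + k) * Real.log K - d) := by
          rw [sub_eq_add_neg, Real.exp_add, add_mul, Real.exp_add]
          rw [show (3 : ℝ) * Real.log K = ((3 : ℕ) : ℝ) * Real.log K by norm_num,
            Real.exp_nat_mul, Real.exp_nat_mul, ← hKexp]
          ring
      _ ≤ Real.exp (-1) := by
          rw [Real.exp_le_exp]; nlinarith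
  have b2 : I2.card * Real.exp (- (7 / 16 * ((d:ℝ) * t))) ≤ Real.exp (-1) := by
    have h2M : (2 : ℝ) ^ M ≤ Real.exp M := by
      rw [← mul_one (M : ℝ), Real.exp_nat_mul]
      gcongr
      have := Real.exp_one_gt_d9
      linarith
    calc I2.card * Real.exp (- (7 / 16 * ((d:ℝ) * t)))
        ≤ ((K : ℝ) * (Real.exp M * ((K : ℝ) ^ k) ^ t)) * Real.exp (- (7 / 16 * ((d:ℝ) * t))) := by
          refine mul_le_mul_of_nonneg_right (hc2.trans ?_) (Real.exp_pos _).le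
          gcongr
      _ = Real.exp (Real.log K + (M + t * (k * Real.log K)) - 7 / 16 * (d * t)) := by
          rw [sub_eq_add_neg, Real.exp_add, Real.exp_add, Real.exp_add, Real.exp_nat_mul,
            Real.exp_nat_mul, ← hKexp]
      _ ≤ Real.exp (-1) := by
          rw [Real.exp_le_exp]
          have a1 : 8 * (k * Real.log K) * t ≤ d * t := by
            refine mul_le_mul_of_nonneg_right ?_ (by linarith)
            linarith
          have a2 : Real.log K ≤ k * Real.log K * t := by
            have : 1 * Real.log K * 1 ≤ k * Real.log K * t := by gcongr; linarith
            linarith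
          nlinarith
  linarith


/-! ### Tight paths in hypergraphs with large codegrees -/

section Path
variable {V : Type*} [DecidableEq V]

/-- The vertices that extend `τ` to an edge of `H`. -/
def cod [Fintype V] (H : Finset (Finset V)) (τ : Finset V) : Finset V :=
  univ.filter (fun w => w ∉ τ ∧ insert w τ ∈ H)

lemma mem_cod [Fintype V] {H : Finset (Finset V)} {τ : Finset V} {w : V} :
    w ∈ cod H τ ↔ w ∉ τ ∧ insert w τ ∈ H := by simp [cod]

/-- Deleting at most `d` edges per set of the shadow, one can reach a subhypergraph `G'` in which
every set of the shadow has at least `d` extensions: as long as some set of the shadow has fewer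
than `d` extensions, remove all edges containing it, which takes it out of the shadow. -/
lemma clean [Fintype V] (d : ℕ) (G : Finset (Finset V)) :
    ∃ G' ⊆ G, (∀ τ ∈ G'.shadow, d ≤ (cod G' τ).card) ∧
      G.card ≤ G'.card + d * G.shadow.card := by
  induction G using Finset.strongInduction with
  | H G ih =>
  by_cases hG : ∀ τ ∈ G.shadow, d ≤ (cod G τ).card
  · exact ⟨G, Subset.rfl, hG, by omega⟩
  push Not at hG
  obtain ⟨τ, hτ, hlt⟩ := hG
  set G1 := G \ (cod G τ).image (fun w => insert w τ) with hG1
  have hsub : G1 ⊆ G := sdiff_subset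
  have hτ1 : τ ∉ G1.shadow := by
    rw [mem_shadow_iff]
    rintro ⟨s, hs, a, ha, rfl⟩
    rw [hG1, mem_sdiff] at hs
    refine hs.2 (mem_image.2 ⟨a, mem_cod.2 ⟨notMem_erase _ _, ?_⟩, insert_erase ha⟩)
    rw [insert_erase ha]; exact hs.1
  have hss : G1 ⊂ G := by
    refine ssubset_of_subset_of_ne hsub ?_
    intro h
    rw [h] at hτ1
    exact hτ1 hτ
  obtain ⟨G', hG', hc, hcard⟩ := ih G1 hss
  refine ⟨G', hG'.trans hsub, hc, ?_⟩
  have h1 : G.card ≤ G1.card + d := by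
    have := le_card_sdiff ((cod G τ).image (fun w => insert w τ)) G
    have h2 := card_image_le (s := cod G τ) (f := fun w => insert w τ)
    rw [← hG1] at this
    omega
  have h2 : G1.shadow.card + 1 ≤ G.shadow.card := by
    refine Nat.succ_le_of_lt (card_lt_card ?_)
    refine ssubset_of_subset_of_ne (shadow_monotone hsub) ?_
    intro h
    rw [h] at hτ1
    exact hτ1 hτ
  calc G.card ≤ G'.card + d * G1.shadow.card + d := by omega
    _ = G'.card + d * (G1.shadow.card + 1) := by ring
    _ ≤ _ := by gcongr

/-- `L` lists, without repetition, the vertices of a tight path of `H`: any `k` consecutive entries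
form an edge. -/
def IsTP (H : Finset (Finset V)) (k : ℕ) (L : List V) : Prop :=
  L.Nodup ∧ ∀ i, i + k ≤ L.length → ((L.drop i).take k).toFinset ∈ H

lemma IsTP.drop {H : Finset (Finset V)} {k : ℕ} {L : List V} (h : IsTP H k L) (j : ℕ) :
    IsTP H k (L.drop j) := by
  refine ⟨h.1.sublist (List.drop_sublist _ _), fun i hi => ?_⟩
  rw [List.length_drop] at hi
  rw [List.drop_drop]
  by_cases hj : j ≤ L.length
  · exact h.2 _ (by omega)
  · have hk : k = 0 := by omega
    subst hk
    simpa using h.2 0 (by omega)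

lemma IsTP.cons {H : Finset (Finset V)} {k : ℕ} {L : List V} (h : IsTP H (k + 1) L) {w : V}
    (hw : w ∉ L) (he : insert w (L.take k).toFinset ∈ H) : IsTP H (k + 1) (w :: L) := by
  refine ⟨List.nodup_cons.2 ⟨hw, h.1⟩, fun i hi => ?_⟩
  cases i with
  | zero => simpa using he
  | succ i =>
    rw [List.drop_succ_cons]
    exact h.2 i (by simp at hi; omega)

/-- A state of the greedy search for a tight path in a `(k + 1)`-uniform hypergraph `H`: the current
path `L`, the set `W` of visited vertices, and the set `T` of the `m` discarded `k`-sets. These are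
pairwise disjoint, disjoint from the path, and all their extensions in `H` lie in `W`. The bound
`cardW` says that at most `2 k` visited vertices are lost with each discarded set: the `k` vertices
of that set and, in case of a restart, at most `k` further vertices of the path. -/
structure Trash [Fintype V] (H : Finset (Finset V)) (k m : ℕ) (L : List V) (W : Finset V)
    (T : Finset (Finset V)) : Prop where
  card : T.card = m
  path : IsTP H (k + 1) L
  len : k + 1 ≤ L.length
  sub : L.toFinset ⊆ W
  subT : ∀ τ ∈ T, τ ⊆ W
  disjL : ∀ τ ∈ T, Disjoint τ L.toFinset
  disj : (T : Set (Finset V)).PairwiseDisjoint id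
  shad : ∀ τ ∈ T, τ ∈ H.shadow
  cods : ∀ τ ∈ T, cod H τ ⊆ W
  cardW : W.card ≤ L.length + 2 * k * m

lemma isTP_edge {H : Finset (Finset V)} {k : ℕ} (hH : ∀ e ∈ H, e.card = k + 1) {e : Finset V}
    (he : e ∈ H) : IsTP H (k + 1) e.toList := by
  refine ⟨e.nodup_toList, fun i hi => ?_⟩
  have hl : e.toList.length = k + 1 := by rw [length_toList, hH e he]
  have : i = 0 := by omega
  subst this
  rw [List.drop_zero, List.take_of_length_le hl.le, toList_toFinset]
  exact he

/-- If `H` has no tight path with `n` vertices, and no small vertex set meets all edges, the greedy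
search can discard `m` sets, for any `m` allowed by the size condition. A longest current path, among
all states with `m` discarded sets, cannot be extended outside `W` at its front, so its first `k`
vertices can be discarded next. -/
lemma trash [Fintype V] (H : Finset (Finset V)) (k n : ℕ) (hk : 1 ≤ k) (hH : ∀ e ∈ H, e.card = k + 1)
    (hno : ∀ L, IsTP H (k + 1) L → L.length < n) (m : ℕ)
    (hcover : ∀ W : Finset V, W.card ≤ n + 2 * k * m → ∃ e ∈ H, Disjoint e W) :
    ∃ L W T, Trash H k m L W T := by
  induction m with
  | zero =>
    obtain ⟨e, he, -⟩ := hcover ∅ (by simp)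
    refine ⟨e.toList, e, ∅, ?_⟩
    constructor <;> try simp
    · exact isTP_edge hH he
    · rw [hH e he]; omega
  | succ m ih =>
    obtain ⟨L0, W0, T0, h0⟩ := ih (fun W hW => hcover W (hW.trans (by gcongr; omega)))
    -- a configuration whose path is as long as possible
    obtain ⟨L, W, T, h, hmax⟩ : ∃ L W T, Trash H k m L W T ∧
        ∀ L' W' T', Trash H k m L' W' T' → L'.length ≤ L.length := by
      classical
      let P : ℕ → Prop := fun ℓ => ∃ L W T, Trash H k m L W T ∧ L.length = ℓ
      have hP : P (Nat.findGreatest P n) :=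
        Nat.findGreatest_spec (P := P) (hno _ h0.path).le ⟨L0, W0, T0, h0, rfl⟩
      obtain ⟨L, W, T, h, hl⟩ := hP
      refine ⟨L, W, T, h, fun L' W' T' h' => ?_⟩
      rw [hl]
      exact Nat.le_findGreatest (hno _ h'.path).le ⟨L', W', T', h', rfl⟩
    set τ := (L.take k).toFinset with hτ
    have hlen := h.len
    have hτL : τ ⊆ L.toFinset := fun x hx => by
      rw [hτ, List.mem_toFinset] at hx
      exact List.mem_toFinset.2 (List.mem_of_mem_take hx)
    have hτc : τ.card = k := by
      rw [hτ, List.toFinset_card_of_nodup (h.path.1.sublist (List.take_sublist _ _)),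
        List.length_take]
      omega
    have hτs : τ ∈ H.shadow := by
      have he : (L.take (k + 1)).toFinset ∈ H := by simpa using h.path.2 0 (by omega)
      have hnd : (L.take (k + 1)).Nodup := h.path.1.sublist (List.take_sublist _ _)
      rw [List.take_succ_eq_append_getElem (by omega)] at he hnd
      rw [mem_shadow_iff]
      refine ⟨(L.take k ++ [L[k]]).toFinset, he, L[k],
        List.mem_toFinset.2 (List.mem_append_right _ (List.mem_singleton_self _)), ?_⟩
      have hnot : L[k] ∉ τ := by
        rw [List.nodup_append] at hnd
        intro hc
        exact hnd.2.2 _ (List.mem_toFinset.1 hc) _ (by simp) rfl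
      rw [List.toFinset_append]
      ext x
      simp only [mem_erase, mem_union, List.mem_toFinset, List.mem_singleton]
      rw [hτ, List.mem_toFinset] at *
      constructor
      · rintro ⟨h1, h2 | h2⟩
        · exact h2
        · exact absurd h2 h1
      · intro hx
        exact ⟨fun hc => hnot (hc ▸ hx), Or.inl hx⟩
    have hcod : cod H τ ⊆ W := by
      intro w hw
      by_contra hwW
      rw [mem_cod] at hw
      have hwL : w ∉ L := fun hc => hwW (h.sub (List.mem_toFinset.2 hc))
      have := hmax (w :: L) (insert w W) T ⟨h.card, h.path.cons hwL hw.2,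
        by simp; omega, by
          rw [List.toFinset_cons]; exact insert_subset_insert _ h.sub,
        fun τ hτ => (h.subT τ hτ).trans (subset_insert _ _), fun τ hτ => by
          rw [List.toFinset_cons, disjoint_insert_right]
          exact ⟨fun hc => hwW (h.subT τ hτ hc), h.disjL τ hτ⟩,
        h.disj, h.shad, fun τ hτ => (h.cods τ hτ).trans (subset_insert _ _), by
          have := card_insert_le w W
          have := h.cardW
          rw [List.length_cons]; omega⟩
      simp at this
    have hτT : τ ∉ T := by
      intro hc
      have h1 := (h.disjL τ hc).mono_right hτL
      rw [disjoint_self, bot_eq_empty] at h1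
      rw [h1, card_empty] at hτc
      omega
    have hdisj : ((insert τ T : Finset (Finset V)) : Set (Finset V)).PairwiseDisjoint id := by
      rw [coe_insert]
      exact h.disj.insert fun τ' hτ' _ => ((h.disjL τ' hτ').mono_right hτL).symm
    have hcardW := h.cardW
    -- a path with at least `2 k + 1` vertices still contains an edge once `τ` is removed from it
    by_cases hlong : 2 * k + 1 ≤ L.length
    · refine ⟨L.drop k, W, insert τ T, ?_⟩
      have hsub : (L.drop k).toFinset ⊆ L.toFinset := fun x hx => by
        rw [List.mem_toFinset] at *
        exact List.mem_of_mem_drop hx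
      constructor
      · rw [card_insert_of_notMem hτT, h.card]
      · exact h.path.drop k
      · rw [List.length_drop]; omega
      · exact hsub.trans h.sub
      · exact fun τ' hτ' => by
          rcases mem_insert.1 hτ' with rfl | hτ'
          · exact hτL.trans h.sub
          · exact h.subT _ hτ'
      · intro τ' hτ'
        rcases mem_insert.1 hτ' with rfl | hτ'
        · rw [disjoint_left]
          intro x hx hx'
          rw [List.mem_toFinset] at hx hx'
          exact (List.disjoint_take_drop h.path.1 le_rfl) hx hx'
        · exact (h.disjL _ hτ').mono_right hsub
      · exact hdisj
      · exact fun τ' hτ' => by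
          rcases mem_insert.1 hτ' with rfl | hτ'
          · exact hτs
          · exact h.shad _ hτ'
      · exact fun τ' hτ' => by
          rcases mem_insert.1 hτ' with rfl | hτ'
          · exact hcod
          · exact h.cods _ hτ'
      · rw [List.length_drop, mul_add, mul_one]; omega
    -- a shorter path is abandoned, and the search restarts from an edge disjoint from `W`
    · obtain ⟨e, he, hdis⟩ := hcover W (by
        have := hno _ h.path
        rw [mul_add, mul_one]; omega)
      refine ⟨e.toList, W ∪ e, insert τ T, ?_⟩
      constructor
      · rw [card_insert_of_notMem hτT, h.card]
      · exact isTP_edge hH he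
      · rw [length_toList, hH e he]
      · rw [toList_toFinset]; exact subset_union_right
      · exact fun τ' hτ' => by
          rcases mem_insert.1 hτ' with rfl | hτ'
          · exact (hτL.trans h.sub).trans subset_union_left
          · exact (h.subT _ hτ').trans subset_union_left
      · intro τ' hτ'
        rw [toList_toFinset]
        rcases mem_insert.1 hτ' with rfl | hτ'
        · exact (hdis.mono_right (hτL.trans h.sub)).symm
        · exact (hdis.mono_right (h.subT _ hτ')).symm
      · exact hdisj
      · exact fun τ' hτ' => by
          rcases mem_insert.1 hτ' with rfl | hτ'
          · exact hτs
          · exact h.shad _ hτ'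
      · exact fun τ' hτ' => by
          rcases mem_insert.1 hτ' with rfl | hτ'
          · exact hcod.trans subset_union_left
          · exact (h.cods _ hτ').trans subset_union_left
      · have := card_union_le W e
        rw [length_toList]
        rw [hH e he] at *
        rw [mul_add, mul_one]; omega

/-- Sufficient conditions for a `(k + 1)`-uniform hypergraph `H` to contain a monochromatic tight
path with `n` vertices in every `r`-colouring: a shadow small enough for `clean` to keep half of the
majority colour (`hbudget`), degrees so small that a set of `n + 2 k t` vertices cannot meet all
remaining edges (`hdeg`, `hΔ`), and no `t` disjoint sets of the shadow that all have `d`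
extensions into such a small set (`hdense`). -/
lemma exists_mono_path [Fintype V] (H : Finset (Finset V)) (k r n t d Δ : ℕ) (hk : 1 ≤ k)
    (hr : 1 ≤ r) (hH : ∀ e ∈ H, e.card = k + 1)
    (hbudget : 2 * r * (d * H.shadow.card) ≤ H.card)
    (hdeg : ∀ v, (H.filter (fun e => v ∈ e)).card ≤ Δ)
    (hΔ : 2 * r * ((n + 2 * k * t) * Δ) < H.card)
    (hdense : ∀ (W : Finset V) (T : Finset (Finset V)), W.card ≤ n + 2 * k * t → T.card = t →
      (∀ τ ∈ T, τ ∈ H.shadow) → (T : Set (Finset V)).PairwiseDisjoint id →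
      ∃ τ ∈ T, (cod H τ ∩ W).card < d)
    (χ : Finset V → Fin r) :
    ∃ c, ∃ L, IsTP (H.filter (fun e => χ e = c)) (k + 1) L ∧ L.length = n := by
  -- a majority colour
  obtain ⟨c, hc⟩ : ∃ c, H.card ≤ r * (H.filter (fun e => χ e = c)).card := by
    by_contra! hcon
    have h1 : H.card = ∑ c : Fin r, (H.filter (fun e => χ e = c)).card :=
      card_eq_sum_card_fiberwise (fun e _ => mem_coe.2 (mem_univ _))
    have h2 : ∑ c : Fin r, r * (H.filter (fun e => χ e = c)).card < ∑ c : Fin r, H.card :=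
      sum_lt_sum_of_nonempty ⟨⟨0, hr⟩, mem_univ _⟩ (fun c _ => hcon c)
    rw [← mul_sum, ← h1] at h2
    simp at h2
  refine ⟨c, ?_⟩
  by_contra hcon
  set G := H.filter (fun e => χ e = c) with hG
  obtain ⟨G', hG', hcl, hcard⟩ := clean d G
  have hGH : G ⊆ H := filter_subset _ _
  have hno : ∀ L, IsTP G' (k + 1) L → L.length < n := by
    intro L hL
    by_contra! hn
    have h1 := hL.drop (L.length - n)
    exact hcon ⟨_, ⟨h1.1, fun i hi => hG' (h1.2 i hi)⟩, by rw [List.length_drop]; omega⟩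
  have hbig : H.card ≤ 2 * r * G'.card := by
    have h1 : d * G.shadow.card ≤ d * H.shadow.card :=
      Nat.mul_le_mul_left _ (card_le_card (shadow_monotone hGH))
    have h2 : r * G.card ≤ r * (G'.card + d * H.shadow.card) := by gcongr; omega
    nlinarith
  have hcover : ∀ W : Finset V, W.card ≤ n + 2 * k * t → ∃ e ∈ G', Disjoint e W := by
    intro W hW
    by_contra! hmeet
    have h1 : G' ⊆ W.biUnion (fun v => H.filter (fun e => v ∈ e)) := by
      intro e he
      obtain ⟨v, hv, hvW⟩ := not_disjoint_iff.1 (hmeet e he)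
      exact mem_biUnion.2 ⟨v, hvW, mem_filter.2 ⟨hGH (hG' he), hv⟩⟩
    have h2 : G'.card ≤ (n + 2 * k * t) * Δ :=
      (card_le_card h1).trans ((card_biUnion_le_card_mul _ _ Δ (fun v _ => hdeg v)).trans
        (by gcongr))
    have h3 : 2 * r * G'.card ≤ 2 * r * ((n + 2 * k * t) * Δ) := by gcongr
    omega
  obtain ⟨L, W, T, hT⟩ := trash G' k n hk (fun e he => hH e (hGH (hG' he))) hno t hcover
  obtain ⟨τ, hτ, hlt⟩ := hdense W T (hT.cardW.trans (by have := hno _ hT.path; omega)) hT.card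
    (fun τ hτ => shadow_monotone (hG'.trans hGH) (hT.shad τ hτ)) hT.disj
  have h1 := hcl τ (hT.shad τ hτ)
  have h2 : cod G' τ ⊆ cod H τ ∩ W := fun w hw => mem_inter.2 ⟨by
    rw [mem_cod] at *
    exact ⟨hw.1, hGH (hG' hw.2)⟩, hT.cods τ hτ hw⟩
  have := card_le_card h2
  omega

end Path


/-! ### The hypergraph of transversal cliques -/

section Cliques
variable {k M q : ℕ} [NeZero q]

/-- `S` is a clique of the `k`-partite graph `g`: its vertices lie in different classes and are
pairwise adjacent. -/
def IsCl (g : Sym2 (Fin k × Fin M) → Fin q) (S : Finset (Fin k × Fin M)) : Prop :=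
  ∀ u ∈ S, ∀ v ∈ S, u ≠ v → u.1 ≠ v.1 ∧ g s(u, v) = 0

open Classical in
/-- The cliques containing `R` that meet exactly the classes in `J`. -/
noncomputable def Cl (g : Sym2 (Fin k × Fin M) → Fin q) (R : Finset (Fin k × Fin M))
    (J : Finset (Fin k)) : Finset (Finset (Fin k × Fin M)) :=
  univ.filter (fun S => R ⊆ S ∧ S.image Prod.fst = J ∧ IsCl g S)

lemma mem_Cl {g : Sym2 (Fin k × Fin M) → Fin q} {R S : Finset (Fin k × Fin M)}
    {J : Finset (Fin k)} : S ∈ Cl g R J ↔ R ⊆ S ∧ S.image Prod.fst = J ∧ IsCl g S := by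
  simp [Cl]

lemma IsCl.card_image {g : Sym2 (Fin k × Fin M) → Fin q} {S : Finset (Fin k × Fin M)}
    (h : IsCl g S) : (S.image Prod.fst).card = S.card := by
  refine card_image_of_injOn fun u hu v hv huv => ?_
  by_contra hne
  exact (h u hu v hv hne).1 huv

lemma IsCl.mono {g : Sym2 (Fin k × Fin M) → Fin q} {S S' : Finset (Fin k × Fin M)}
    (h : IsCl g S) (hs : S' ⊆ S) : IsCl g S' :=
  fun u hu v hv => h u (hs hu) v (hs hv)

lemma mem_nb {g : Sym2 (Fin k × Fin M) → Fin q} {S : Finset (Fin k × Fin M)} {i : Fin k}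
    {y : Fin M} : y ∈ nb g S i ↔ ∀ x ∈ S, g s((i, y), x) = 0 := by simp [nb]

lemma IsCl.extend {g : Sym2 (Fin k × Fin M) → Fin q} {S : Finset (Fin k × Fin M)}
    (h : IsCl g S) {i : Fin k} {y : Fin M} (hi : ∀ x ∈ S, x.1 ≠ i) (hy : y ∈ nb g S i) :
    IsCl g (insert (i, y) S) := by
  rw [mem_nb] at hy
  intro u hu v hv huv
  rcases mem_insert.1 hu with rfl | hu <;> rcases mem_insert.1 hv with rfl | hv
  · exact absurd rfl huv
  · exact ⟨(hi v hv).symm, hy v hv⟩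
  · exact ⟨hi u hu, by rw [Sym2.eq_swap]; exact hy u hu⟩
  · exact h u hu v hv huv

lemma IsCl.mem_nb {g : Sym2 (Fin k × Fin M) → Fin q} {S : Finset (Fin k × Fin M)}
    {w : Fin k × Fin M} (h : IsCl g (insert w S)) (hw : w ∉ S) : w.2 ∈ nb g S w.1 := by
  rw [LPath.mem_nb]
  intro x hx
  exact (h w (mem_insert_self _ _) x (mem_insert_of_mem hx) (fun hc => hw (hc ▸ hx))).2

/-- A clique meeting the classes in `insert i J` is a clique meeting those in `J` together with a
common neighbour of it in class `i`. -/
lemma card_Cl_insert (g : Sym2 (Fin k × Fin M) → Fin q) (R : Finset (Fin k × Fin M))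
    (J : Finset (Fin k)) (i : Fin k) (hi : i ∉ J) (hR : ∀ x ∈ R, x.1 ≠ i) :
    (Cl g R (insert i J)).card = ∑ S ∈ Cl g R J, (nb g S i).card := by
  rw [card_eq_sum_card_fiberwise (f := fun S => S.filter (fun x => x.1 ≠ i)) (t := Cl g R J)]
  · refine sum_congr rfl fun S hS => ?_
    obtain ⟨hRS, hSJ, hcl⟩ := mem_Cl.1 hS
    have hSi : ∀ x ∈ S, x.1 ≠ i := fun x hx hc =>
      hi (by rw [← hSJ, ← hc]; exact mem_image_of_mem _ hx)
    have himg : (Cl g R (insert i J)).filter (fun S' => S'.filter (fun x => x.1 ≠ i) = S)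
        = (nb g S i).image (fun y => insert (i, y) S) := by
      ext S'
      rw [mem_filter, mem_Cl, mem_image]
      constructor
      · rintro ⟨⟨h1, h2, h3⟩, rfl⟩
        have : i ∈ S'.image Prod.fst := by rw [h2]; exact mem_insert_self _ _
        obtain ⟨⟨i', y⟩, hw, hwi⟩ := mem_image.1 this
        simp only at hwi
        subst hwi
        have heq : insert (i', y) (S'.filter (fun x => x.1 ≠ i')) = S' := by
          ext x
          simp only [mem_insert, mem_filter]
          constructor
          · rintro (rfl | h)
            · exact hw
            · exact h.1
          · intro hx
            by_cases hxe : x = (i', y)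
            · exact Or.inl hxe
            · exact Or.inr ⟨hx, (h3 x hx _ hw hxe).1⟩
        refine ⟨y, ?_, heq⟩
        exact IsCl.mem_nb (w := (i', y)) (by rw [heq]; exact h3) (by simp)
      · rintro ⟨y, hy, rfl⟩
        refine ⟨⟨hRS.trans (subset_insert _ _), by rw [image_insert, hSJ], hcl.extend hSi hy⟩, ?_⟩
        rw [filter_insert, if_neg (by simp), filter_true_of_mem hSi]
    rw [himg, card_image_of_injOn]
    intro y _ y' _ h
    have h' : insert (i, y) S = insert (i, y') S := h
    have : (i, y) ∈ insert (i, y') S := by rw [← h']; exact mem_insert_self _ _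
    rcases mem_insert.1 this with h | h
    · exact (Prod.mk.inj h).2
    · exact absurd rfl (hSi _ h)
  · intro S hS
    obtain ⟨h1, h2, h3⟩ := mem_Cl.1 (mem_coe.1 hS)
    refine mem_coe.2 (mem_Cl.2 ⟨fun x hx => mem_filter.2 ⟨h1 hx, hR x hx⟩, ?_,
      h3.mono (filter_subset _ _)⟩)
    ext j
    simp only [mem_image, mem_filter]
    constructor
    · rintro ⟨x, ⟨hx, hxi⟩, rfl⟩
      have : x.1 ∈ insert i J := by rw [← h2]; exact mem_image_of_mem _ hx
      exact (mem_insert.1 this).resolve_left hxi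
    · intro hj
      have : j ∈ S.image Prod.fst := by rw [h2]; exact mem_insert_of_mem hj
      obtain ⟨x, hx, rfl⟩ := mem_image.1 this
      exact ⟨x, ⟨hx, fun hc => hi (hc ▸ hj)⟩, rfl⟩

/-- The number of extensions of a clique `R` to the classes in `D`, obtained by adding one vertex
at a time: a clique with `j` vertices has about `M / q ^ j` extensions to a new class. -/
lemma card_Cl_bounds {g : Sym2 (Fin k × Fin M) → Fin q} (hg : RegularNb g)
    (R : Finset (Fin k × Fin M)) (hR : IsCl g R) (D : Finset (Fin k))
    (hD : Disjoint (R.image Prod.fst) D) :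
    ∏ j ∈ Ico R.card (R.card + D.card), ((M : ℝ) / (2 * (q : ℝ) ^ j))
        ≤ (Cl g R (R.image Prod.fst ∪ D)).card ∧
    ((Cl g R (R.image Prod.fst ∪ D)).card : ℝ)
        ≤ ∏ j ∈ Ico R.card (R.card + D.card), (2 * (M : ℝ) / (q : ℝ) ^ j) := by
  induction D using Finset.induction_on with
  | empty =>
    have : Cl g R (R.image Prod.fst ∪ ∅) = {R} := by
      ext S
      rw [mem_Cl, mem_singleton, union_empty]
      constructor
      · rintro ⟨h1, h2, h3⟩
        refine (eq_of_subset_of_card_le h1 ?_).symm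
        rw [← h3.card_image, h2, hR.card_image]
      · rintro rfl
        exact ⟨Subset.rfl, rfl, hR⟩
    rw [this]
    simp
  | insert i D hi ih =>
    rw [disjoint_insert_right] at hD
    obtain ⟨ih1, ih2⟩ := ih hD.2
    have hiJ : i ∉ R.image Prod.fst ∪ D := by
      rw [mem_union]; exact fun h => h.elim hD.1 hi
    have hcardJ : (R.image Prod.fst ∪ D).card = R.card + D.card := by
      rw [card_union_of_disjoint hD.2, hR.card_image]
    have hlt : R.card + D.card < k := by
      have := card_le_univ (insert i (R.image Prod.fst ∪ D))
      rw [card_insert_of_notMem hiJ, hcardJ, Fintype.card_fin] at this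
      omega
    rw [union_insert, card_Cl_insert g R _ i hiJ (fun x hx hc =>
      hD.1 (hc ▸ mem_image_of_mem _ hx)), card_insert_of_notMem hi, ← add_assoc,
      prod_Ico_succ_top (by omega), prod_Ico_succ_top (by omega)]
    have hb : ∀ S ∈ Cl g R (R.image Prod.fst ∪ D),
        (M : ℝ) / (2 * (q : ℝ) ^ (R.card + D.card)) ≤ (nb g S i).card ∧
        ((nb g S i).card : ℝ) ≤ 2 * M / (q : ℝ) ^ (R.card + D.card) := by
      intro S hS
      obtain ⟨h1, h2, h3⟩ := mem_Cl.1 hS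
      have hSc : S.card = R.card + D.card := by rw [← h3.card_image, h2, hcardJ]
      rw [← hSc]
      refine hg S (hSc ▸ hlt) i fun x hx hc => hiJ ?_
      rw [← h2, ← hc]
      exact mem_image_of_mem _ hx
    push_cast
    constructor
    · refine le_trans ?_ (card_nsmul_le_sum _ _ _ (fun S hS => (hb S hS).1))
      rw [nsmul_eq_mul]
      gcongr
    · refine (sum_le_card_nsmul _ _ _ (fun S hS => (hb S hS).2)).trans ?_
      rw [nsmul_eq_mul]
      gcongr

/-- The host hypergraph: the cliques of `g` that meet every class. -/
noncomputable def host (g : Sym2 (Fin k × Fin M) → Fin q) : Finset (Finset (Fin k × Fin M)) :=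
  Cl g ∅ univ

lemma mem_host {g : Sym2 (Fin k × Fin M) → Fin q} {S : Finset (Fin k × Fin M)} :
    S ∈ host g ↔ S.image Prod.fst = univ ∧ IsCl g S := by
  rw [host, mem_Cl]; simp

lemma card_of_mem_host {g : Sym2 (Fin k × Fin M) → Fin q} {S : Finset (Fin k × Fin M)}
    (h : S ∈ host g) : S.card = k := by
  obtain ⟨h1, h2⟩ := mem_host.1 h
  rw [← h2.card_image, h1, card_univ, Fintype.card_fin]

lemma card_host {g : Sym2 (Fin k × Fin M) → Fin q} (hg : RegularNb g) :
    ∏ j ∈ range k, ((M : ℝ) / (2 * (q : ℝ) ^ j)) ≤ (host g).card ∧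
    ((host g).card : ℝ) ≤ ∏ j ∈ range k, (2 * (M : ℝ) / (q : ℝ) ^ j) := by
  have := card_Cl_bounds hg ∅ (by simp [IsCl]) univ (by simp)
  simpa [host] using this

lemma deg_host {g : Sym2 (Fin k × Fin M) → Fin q} (hg : RegularNb g) (hk : 1 ≤ k)
    (v : Fin k × Fin M) : (((host g).filter (fun e => v ∈ e)).card : ℝ)
      ≤ ∏ j ∈ Ico 1 k, (2 * (M : ℝ) / (q : ℝ) ^ j) := by
  have h := (card_Cl_bounds hg {v} (by simp [IsCl]) (univ \ {v.1}) (by simp)).2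
  have h1 : (host g).filter (fun e => v ∈ e) = Cl g {v} univ := by
    ext S
    rw [mem_filter, mem_host, mem_Cl, singleton_subset_iff]
    tauto
  have h2 : 1 + (univ \ {v.1} : Finset (Fin k)).card = k := by
    rw [card_sdiff_of_subset (subset_univ _), card_univ, Fintype.card_fin, card_singleton]; omega
  have h3 : ({v.1} : Finset (Fin k)) ∪ (univ \ {v.1}) = univ := by simp
  rw [image_singleton, h3, card_singleton, h2] at h
  rw [h1]; exact h

/-- A set of the shadow of the host is a `(k - 1)`-set avoiding exactly one class `i`, and its
extensions are its common neighbours in class `i`. -/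
lemma shadow_host {g : Sym2 (Fin k × Fin M) → Fin q} {τ : Finset (Fin k × Fin M)}
    (h : τ ∈ (host g).shadow) : τ.card = k - 1 ∧ ∃ i : Fin k, (∀ x ∈ τ, x.1 ≠ i) ∧
      cod (host g) τ = (nb g τ i).image (fun y => (i, y)) := by
  obtain ⟨e, he, x, hx, rfl⟩ := mem_shadow_iff.1 h
  obtain ⟨h1, h2⟩ := mem_host.1 he
  have hne : ∀ z ∈ e.erase x, z.1 ≠ x.1 := fun z hz =>
    (h2 z (mem_of_mem_erase hz) x hx (ne_of_mem_erase hz)).1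
  refine ⟨by rw [card_erase_of_mem hx, card_of_mem_host he], x.1, hne, ?_⟩
  have hcls : (e.erase x).image Prod.fst ∪ {x.1} = univ := by
    rw [← h1, ← insert_erase hx, image_insert, erase_insert (notMem_erase _ _), insert_eq,
      union_comm]
  ext w
  rw [mem_cod, mem_host, mem_image]
  constructor
  · rintro ⟨hw, hw1, hw2⟩
    have hwx : w.1 = x.1 := by
      have : x.1 ∈ (insert w (e.erase x)).image Prod.fst := by rw [hw1]; exact mem_univ _
      obtain ⟨z, hz, hzx⟩ := mem_image.1 this
      rcases mem_insert.1 hz with rfl | hz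
      · exact hzx
      · exact absurd hzx (hne z hz)
    refine ⟨w.2, ?_, by rw [← hwx]⟩
    rw [← hwx]
    exact hw2.mem_nb hw
  · rintro ⟨y, hy, rfl⟩
    refine ⟨fun hc => hne _ hc rfl, ?_, (h2.mono (erase_subset _ _)).extend hne hy⟩
    rw [image_insert, insert_eq, union_comm]
    exact hcls

/-- Double counting of the pairs consisting of an edge and a `(k - 1)`-subset of it: every edge has
`k` such subsets, and every set of the shadow lies in at least `m k` edges. -/
lemma shadow_card_host {g : Sym2 (Fin k × Fin M) → Fin q} (hg : RegularNb g) (hk : 1 ≤ k)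
    (m : ℕ) (hm : (m * k : ℕ) ≤ (M : ℝ) / (2 * (q : ℝ) ^ (k - 1))) :
    m * (host g).shadow.card ≤ (host g).card := by
  have key : (host g).shadow.card * (m * k) ≤ (host g).card * k := by
    refine card_mul_le_card_mul (fun τ e => τ ⊆ e) (fun τ hτ => ?_) (fun e he => ?_)
    · obtain ⟨hc, i, hi, hcod⟩ := shadow_host hτ
      have h1 : m * k ≤ (nb g τ i).card := by
        have := (hg τ (by omega) i hi).1
        rw [hc] at this
        exact_mod_cast hm.trans this
      refine h1.trans ?_
      have h2 : (cod (host g) τ).card = (nb g τ i).card := by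
        rw [hcod, card_image_of_injective _ (fun y y' h => (Prod.mk.inj h).2)]
      rw [← h2]
      refine card_le_card_of_injOn (fun w => insert w τ) (fun w hw => ?_) ?_
      · rw [mem_coe, mem_cod] at hw
        exact mem_coe.2 ((mem_bipartiteAbove _).2 ⟨hw.2, subset_insert _ _⟩)
      · intro w hw w' hw' h
        rw [mem_coe, mem_cod] at hw hw'
        have h' : insert w τ = insert w' τ := h
        have : w ∈ insert w' τ := by rw [← h']; exact mem_insert_self _ _
        exact (mem_insert.1 this).resolve_right hw.1
    · have : bipartiteBelow (fun τ e => τ ⊆ e) (host g).shadow e ⊆ powersetCard (k - 1) e := by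
        intro τ hτ
        obtain ⟨h1, h2⟩ := (mem_bipartiteBelow _).1 hτ
        exact mem_powersetCard.2 ⟨h2, (shadow_host h1).1⟩
      refine (card_le_card this).trans ?_
      rw [card_powersetCard, card_of_mem_host he, Nat.choose_symm hk, Nat.choose_one_right]
  nlinarith

/-- The host of a graph with the properties `RegularNb` and `NoDenseSpot` satisfies the conditions
of `exists_mono_path`, with `k t` discarded sets. Among `k t` disjoint sets of the shadow, `t` avoid
the same class, so that `NoDenseSpot` applies to them. -/
lemma host_mono_path (hk : 3 ≤ k) (hM : 1 ≤ M) (r n t d : ℕ) (hr : 1 ≤ r)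
    {g : Sym2 (Fin k × Fin M) → Fin q} (hg : RegularNb g)
    (hnd : NoDenseSpot (n + 2 * (k - 1) * (k * t)) t d g)
    (h1 : (2 * r * d * k : ℕ) ≤ (M : ℝ) / (2 * (q : ℝ) ^ (k - 1)))
    (h2 : r * (n + 2 * (k - 1) * (k * t)) * 4 ^ k < M)
    (χ : Finset (Fin k × Fin M) → Fin r) :
    ∃ c, ∃ L, IsTP ((host g).filter (fun e => χ e = c)) k L ∧ L.length = n := by
  have hk1 : k - 1 + 1 = k := by omega
  have hq : (0 : ℝ) < q := by exact_mod_cast NeZero.pos q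
  have hMR : (0 : ℝ) < M := by exact_mod_cast hM
  set w := n + 2 * (k - 1) * (k * t) with hw
  set p : ℝ := ∏ j ∈ Ico 1 k, (2 * (M : ℝ) / (q : ℝ) ^ j) with hp
  have hp0 : 0 < p := prod_pos fun j _ => by positivity
  have main := exists_mono_path (host g) (k - 1) r n (k * t) d ⌊p⌋₊ (by omega) hr
    (fun e he => by rw [hk1]; exact card_of_mem_host he) ?_
    (fun v => Nat.le_floor (deg_host hg (by omega) v)) ?_ ?_ χ
  · rwa [hk1] at main
  · rw [← mul_assoc]
    exact shadow_card_host hg (by omega) _ h1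
  · have hlow := (card_host hg).1
    have e1 : ∏ j ∈ range k, ((M : ℝ) / (2 * (q : ℝ) ^ j)) = M / 2 * (p / 4 ^ (k - 1)) := by
      rw [range_eq_Ico, prod_eq_prod_Ico_succ_bot (by omega), hp, pow_zero, mul_one]
      congr 1
      have : (4 : ℝ) ^ (k - 1) = ∏ j ∈ Ico 1 k, (4 : ℝ) := by simp
      rw [this, ← prod_div_distrib]
      refine prod_congr rfl fun j _ => ?_
      field_simp
      norm_num
    have e2 : (r * w * 4 ^ k : ℝ) < M := by exact_mod_cast h2
    have e3 : (4 : ℝ) ^ k = 4 * 4 ^ (k - 1) := by rw [← pow_succ', hk1]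
    have e4 : (2 * r * (w * ⌊p⌋₊) : ℝ) < (host g).card := by
      refine lt_of_lt_of_le ?_ hlow
      rw [e1]
      calc (2 * r * (w * ⌊p⌋₊) : ℝ) ≤ 2 * r * (w * p) := by
            gcongr; exact Nat.floor_le hp0.le
        _ = (r * w * 4 ^ k) / 2 * (p / 4 ^ (k - 1)) := by rw [e3]; field_simp; ring
        _ < _ := by gcongr
    exact_mod_cast e4
  · intro W T hW hT hTs hTd
    have : Nonempty (Fin k) := ⟨⟨0, by omega⟩⟩
    choose! cls hcls using fun τ hτ => (shadow_host (hTs τ hτ)).2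
    obtain ⟨i, hi⟩ : ∃ i : Fin k, t ≤ (T.filter (fun τ => cls τ = i)).card := by
      by_contra! hcon
      have e1 : T.card = ∑ i : Fin k, (T.filter (fun τ => cls τ = i)).card :=
        card_eq_sum_card_fiberwise (fun e _ => mem_coe.2 (mem_univ _))
      have e2 : ∑ i : Fin k, (T.filter (fun τ => cls τ = i)).card < ∑ i : Fin k, t :=
        sum_lt_sum_of_nonempty ⟨⟨0, by omega⟩, mem_univ _⟩ (fun c _ => hcon c)
      rw [← e1] at e2
      simp [hT] at e2
    obtain ⟨T', hT', hT'c⟩ := exists_subset_card_eq hi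
    have hT'T : ∀ τ ∈ T', τ ∈ T ∧ cls τ = i := fun τ hτ => mem_filter.1 (hT' hτ)
    obtain ⟨τ, hτ, hlt⟩ := hnd i (univ.filter (fun y => (i, y) ∈ W)) T' (by
        refine le_trans (card_le_card_of_injOn (fun y => (i, y)) (fun y hy => ?_) ?_) hW
        · simpa using hy
        · exact fun y _ y' _ h => (Prod.mk.inj h).2) hT'c
      (fun τ hτ => (shadow_host (hTs τ (hT'T τ hτ).1)).1)
      (fun τ hτ => by
        have := (hcls τ (hT'T τ hτ).1).1
        rwa [(hT'T τ hτ).2] at this)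
      (hTd.subset (fun τ hτ => (hT'T τ hτ).1))
    refine ⟨τ, (hT'T τ hτ).1, lt_of_le_of_lt ?_ hlt⟩
    have hc := (hcls τ (hT'T τ hτ).1).2
    rw [(hT'T τ hτ).2] at hc
    rw [hc]
    refine le_trans (card_le_card (t := (nb g τ i ∩ univ.filter (fun y => (i, y) ∈ W)).image
      (fun y => (i, y))) ?_) card_image_le
    intro v hv
    obtain ⟨hv1, hv2⟩ := mem_inter.1 hv
    obtain ⟨y, hy, rfl⟩ := mem_image.1 hv1
    exact mem_image_of_mem _ (mem_inter.2 ⟨hy, by simpa using hv2⟩)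

end Cliques


/-! ### From tight paths to the size-Ramsey number -/

/-- A `k`-uniform hypergraph that contains a monochromatic tight path with `n` vertices in every
`r`-colouring bounds the size-Ramsey number of the `l`-path, which is a subhypergraph of the tight
path on the same vertices. The vertices of `H` are encoded as natural numbers. -/
lemma sizeRamsey_le {V : Type*} [Fintype V] [DecidableEq V] (k l n r : ℕ) (hl : l ≤ k - 1)
    (hk : 1 ≤ k) (hn : l ≤ n) (H : Finset (Finset V)) (hH : ∀ e ∈ H, e.card = k)
    (hp : ∀ χ : Finset V → Fin r,
      ∃ c, ∃ L, IsTP (H.filter (fun e => χ e = c)) k L ∧ L.length = n) :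
    sizeRamsey k (Finset.Icc 1 n) (lPathEdges k l n) r ≤ H.card := by
  let enc : V → ℕ := fun v => (Fintype.equivFin V v : ℕ)
  have henc : Function.Injective enc := fun v v' h =>
    (Fintype.equivFin V).injective (Fin.ext h)
  have hcard : (H.image (fun e => e.image enc)).card = H.card :=
    card_image_of_injective _ (image_injective henc)
  refine Nat.sInf_le ⟨H.image (fun e => e.image enc), ?_, hcard, ?_⟩
  · intro e he
    obtain ⟨e', he', rfl⟩ := mem_image.1 he
    rw [card_image_of_injective _ henc, hH e' he']
  intro χ
  obtain ⟨c, L, hL, hlen⟩ := hp (fun e => χ (e.image enc))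
  -- the `j`-th vertex of the `l`-path is sent to the `j`-th vertex of the tight path;
  -- lists are indexed from `0`
  refine ⟨fun j => if h : j - 1 < L.length then enc L[j - 1] else 0, ?_, c, ?_⟩
  · intro a ha b hb hab
    rw [mem_coe, mem_Icc] at ha hb
    have ha' : a - 1 < L.length := by omega
    have hb' : b - 1 < L.length := by omega
    simp only [ha', hb', dif_pos] at hab
    have := (hL.1.getElem_inj_iff).1 (henc hab)
    omega
  · intro e he
    obtain ⟨i, hi, rfl⟩ := mem_image.1 he
    rw [mem_Icc] at hi
    obtain ⟨a, rfl⟩ : ∃ a, i = a + 1 := ⟨i - 1, by omega⟩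
    rw [Nat.add_sub_cancel]
    set s := a * (k - l) with hs
    have hsk : s + k ≤ n := by
      have h1 := (Nat.le_div_iff_mul_le (by omega)).1 hi.2
      rw [add_mul, one_mul, ← hs] at h1
      omega
    have himg : (Finset.Icc (s + 1) (s + k)).image
        (fun j => if h : j - 1 < L.length then enc L[j - 1] else 0)
        = ((L.drop s).take k).toFinset.image enc := by
      ext x
      simp only [mem_image, mem_Icc, List.mem_toFinset]
      constructor
      · rintro ⟨j, ⟨h1, h2⟩, rfl⟩
        have hj : j - 1 < L.length := by omega
        rw [dif_pos hj]
        refine ⟨_, ?_, rfl⟩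
        rw [List.mem_iff_getElem]
        refine ⟨j - 1 - s, ?_, ?_⟩
        · rw [List.length_take, List.length_drop]; omega
        · rw [List.getElem_take, List.getElem_drop]
          congr 1; omega
      · rintro ⟨v, hv, rfl⟩
        rw [List.mem_iff_getElem] at hv
        obtain ⟨j, hj, rfl⟩ := hv
        rw [List.length_take, List.length_drop] at hj
        refine ⟨s + j + 1, by omega, ?_⟩
        have : s + j + 1 - 1 < L.length := by omega
        rw [dif_pos this]
        congr 1
        rw [List.getElem_take, List.getElem_drop]
        congr 1
    rw [himg]
    have hmem := mem_filter.1 (hL.2 s (by omega))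
    exact ⟨mem_image_of_mem _ hmem.1, hmem.2⟩

/-- The integer part of the `m`-th root of `y ≥ 1` is the root up to a factor `2`. -/
lemma exists_root (m : ℕ) (hm : 1 ≤ m) (y : ℝ) (hy : 1 ≤ y) :
    ∃ q : ℕ, 1 ≤ q ∧ (q : ℝ) ^ m ≤ y ∧ y ≤ 2 ^ m * (q : ℝ) ^ m := by
  set z : ℝ := y ^ ((1 : ℝ) / m) with hz
  have hz1 : 1 ≤ z := Real.one_le_rpow hy (by positivity)
  have hzm : z ^ m = y := by
    rw [hz, one_div]; exact Real.rpow_inv_natCast_pow (by linarith) (by omega)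
  have hq1 : 1 ≤ ⌊z⌋₊ := Nat.le_floor (by simpa using hz1)
  refine ⟨⌊z⌋₊, hq1, ?_, ?_⟩
  · rw [← hzm]
    gcongr
    exact Nat.floor_le (by linarith)
  · rw [← hzm, ← mul_pow]
    gcongr
    have := Nat.lt_floor_add_one z
    have h1 : (1 : ℝ) ≤ (⌊z⌋₊ : ℝ) := by exact_mod_cast hq1
    linarith

/-- Pairing the factors with indices `j` and `k - 1 - j`, which have the constant product
`4 M * (M / q ^ (k - 1))`. -/
lemma prod_sq (k : ℕ) (M q : ℝ) (hq : 0 < q) :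
    (∏ j ∈ range k, (2 * M / q ^ j)) ^ 2 = (4 * M * (M / q ^ (k - 1))) ^ k := by
  rw [sq]
  nth_rewrite 2 [← prod_range_reflect]
  rw [← prod_mul_distrib]
  have : ∀ j ∈ range k, 2 * M / q ^ j * (2 * M / q ^ (k - 1 - j)) = 4 * M * (M / q ^ (k - 1)) := by
    intro j hj
    rw [mem_range] at hj
    have : q ^ (k - 1) = q ^ j * q ^ (k - 1 - j) := by rw [← pow_add]; congr 1; omega
    rw [this]
    field_simp
    ring
  rw [prod_congr rfl this, prod_const, card_range]

set_option maxHeartbeats 1000000 in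
/-- The choice of parameters, for `n` large enough compared with `k` and `r`: `M = A r n` vertices
in each class; `q` such that `D = M / q ^ (k - 1)` lies between `X = 128 k ^ 2 r log n` and
`2 ^ (k - 1) X`; the codegree threshold `d = ⌊D / (4 r k)⌋`; and `t = ⌈16 M / d⌉`. The bound is squared
so that the exponent is an integer. -/
lemma sizeRamsey_bound (k l r n : ℕ) (hk : 3 ≤ k) (hlk : l ≤ k - 1) (hr : 2 ≤ r)
    (A : ℕ) (hA : A = 128 * 4 ^ k * k ^ 2)
    (hn : (4 * k ^ 2 * A * r : ℝ) ≤ Real.log n) :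
    (sizeRamsey k (Finset.Icc 1 n) (lPathEdges k l n) r : ℝ) ^ 2
      ≤ (4 * (A * (2 ^ (k - 1) * (128 * k ^ 2))) * (r : ℝ) ^ 2 * (n * Real.log n)) ^ k := by
  set ℓ := Real.log n with hℓ
  clear_value ℓ
  have hkR : (3 : ℝ) ≤ k := by exact_mod_cast hk
  have hrR : (2 : ℝ) ≤ r := by exact_mod_cast hr
  have hk2 : (9 : ℝ) ≤ (k : ℝ) ^ 2 := by nlinarith
  have hAR : (A : ℝ) = 128 * 4 ^ k * k ^ 2 := by rw [hA]; push_cast; rfl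
  have h4k : (64 : ℝ) ≤ 4 ^ k := by
    calc (64 : ℝ) = 4 ^ 3 := by norm_num
      _ ≤ 4 ^ k := pow_le_pow_right₀ (by norm_num) hk
  have hA1 : 128 * (k : ℝ) ^ 2 ≤ A := by rw [hAR]; nlinarith
  have hA2 : 64 * (k : ℝ) ≤ A := by nlinarith
  have hA3 : 2 * (4 : ℝ) ^ k < A := by rw [hAR]; nlinarith
  have hA4 : (1 : ℝ) ≤ A := by nlinarith
  have hbase : (4 * k ^ 2 * A : ℝ) ≤ ℓ ∧ (k * A * r : ℝ) ≤ ℓ ∧ (4 * k ^ 2 : ℝ) ≤ ℓ ∧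
      4 * k ^ 2 * (A * r : ℝ) ≤ ℓ := by
    have e1 : (1 : ℝ) ≤ A * r := by nlinarith
    refine ⟨le_trans ?_ hn, le_trans ?_ hn, le_trans ?_ hn, by linarith⟩
    · have : (0 : ℝ) ≤ 4 * k ^ 2 * A := by positivity
      nlinarith
    · have : (k : ℝ) ≤ 4 * k ^ 2 := by nlinarith
      calc (k * A * r : ℝ) ≤ 4 * k ^ 2 * A * r := by gcongr
        _ = _ := rfl
    · nlinarith
  obtain ⟨hb1, hb2, hb3, hb4⟩ := hbase
  have hℓ1 : 36 ≤ ℓ := by linarith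
  have hn0 : (0 : ℝ) < n := by
    rcases Nat.eq_zero_or_pos n with h | h
    · rw [hℓ, h] at hℓ1; norm_num at hℓ1
    · exact_mod_cast h
  have hnℓ : ℓ ≤ n := by
    have := Real.log_le_sub_one_of_pos hn0
    linarith
  -- the number of vertices in each class
  set M : ℕ := A * r * n with hM
  have hMR : (M : ℝ) = A * r * n := by rw [hM]; push_cast; rfl
  have hM0 : (0 : ℝ) < M := by rw [hMR]; positivity
  have hM1 : 1 ≤ M := by exact_mod_cast hM0
  -- the order of magnitude of the codegrees
  set X : ℝ := 128 * k ^ 2 * r * ℓ with hX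
  clear_value X M
  have hX0 : 0 < X := by rw [hX]; positivity
  have hXM : X ≤ M := by
    rw [hX, hMR]
    gcongr
  obtain ⟨q, hq1, hq2, hq3⟩ := exists_root (k - 1) (by omega) (M / X) (by
    rw [le_div_iff₀ hX0]; linarith)
  have : NeZero q := ⟨by omega⟩
  have hq0 : (0 : ℝ) < q := by exact_mod_cast hq1
  have hQ : (0 : ℝ) < (q : ℝ) ^ (k - 1) := by positivity
  set D : ℝ := M / (q : ℝ) ^ (k - 1) with hD
  have hD1 : X ≤ D := by
    rw [hD, le_div_iff₀ hQ]
    rw [le_div_iff₀ hX0] at hq2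
    linarith
  have hD2 : D ≤ 2 ^ (k - 1) * X := by
    rw [hD, div_le_iff₀ hQ]
    rw [div_le_iff₀ hX0] at hq3
    linarith
  set d : ℕ := ⌊D / (4 * r * k)⌋₊ with hd
  have hrk : (0 : ℝ) < 4 * r * k := by positivity
  have hDrk : 32 * k * ℓ ≤ D / (4 * r * k) := by
    rw [le_div_iff₀ hrk]
    calc 32 * k * ℓ * (4 * r * k) = X := by rw [hX]; ring
      _ ≤ D := hD1
  have hkℓ : 1 ≤ k * ℓ := by nlinarith
  have hd1 : (d : ℝ) * (4 * r * k) ≤ D := by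
    rw [← le_div_iff₀ hrk]
    exact Nat.floor_le (by positivity)
  have hd2 : D / (4 * r * k) ≤ 2 * d := by
    have := Nat.lt_floor_add_one (D / (4 * r * k))
    rw [← hd] at this
    linarith
  have hd3 : 16 * k * ℓ ≤ d := by linarith
  have hd0 : (0 : ℝ) < d := by linarith
  set t : ℕ := ⌈16 * (M : ℝ) / d⌉₊ with ht
  have ht1 : 16 * (M : ℝ) ≤ d * t := by
    have := Nat.le_ceil (16 * (M : ℝ) / d)
    rw [div_le_iff₀ hd0] at this
    linarith
  have ht2 : (2 * (k - 1 : ℕ) * (k * t) : ℝ) ≤ n := by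
    have e1 : (t : ℝ) ≤ 16 * (M : ℝ) / d + 1 := (Nat.ceil_lt_add_one (by positivity)).le
    have e2 : 16 * (M : ℝ) / d ≤ n / (4 * k ^ 2) := by
      rw [div_le_div_iff₀ hd0 (by positivity), hMR]
      calc 16 * (A * r * n : ℝ) * (4 * k ^ 2) = 16 * n * (4 * k ^ 2 * (A * r)) := by ring
        _ ≤ 16 * n * ℓ := by gcongr
        _ ≤ n * (16 * k * ℓ) := by nlinarith [mul_pos hn0 (lt_of_lt_of_le (by norm_num) hℓ1)]
        _ ≤ n * d := by gcongr
    have e3 : ((k - 1 : ℕ) : ℝ) ≤ k := by exact_mod_cast Nat.sub_le _ _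
    have e4 : (2 * k ^ 2 : ℝ) * (n / (4 * k ^ 2)) = n / 2 := by field_simp; norm_num
    calc (2 * (k - 1 : ℕ) * (k * t) : ℝ) ≤ 2 * k * (k * (n / (4 * k ^ 2) + 1)) := by
          gcongr; linarith
      _ = n / 2 + 2 * k ^ 2 := by rw [← e4]; ring
      _ ≤ n := by linarith
  -- the largest possible number of visited vertices
  set w : ℕ := n + 2 * (k - 1) * (k * t) with hw
  have hw2 : (w : ℝ) ≤ 2 * n := by rw [hw]; push_cast; linarith
  obtain ⟨g, hg, hnd⟩ := exists_good (k := k) (M := M) (q := q) hk hM1 w t d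
    (by
      change 16 * (d : ℝ) ≤ D
      have e1 : (6 : ℝ) ≤ r * k := by nlinarith
      nlinarith [mul_le_mul_of_nonneg_left e1 hd0.le])
    (by
      have e1 : Real.log ((k : ℝ) * M) ≤ 2 * ℓ := by
        rw [hℓ, show 2 * Real.log (n : ℝ) = Real.log ((n : ℝ) ^ 2) by rw [Real.log_pow]; norm_num]
        apply Real.log_le_log (by positivity)
        rw [hMR, sq]
        calc (k * (A * r * n) : ℝ) = k * A * r * n := by ring
          _ ≤ n * n := by gcongr; linarith
      calc 8 * k * Real.log ((k : ℝ) * M) ≤ 8 * k * (2 * ℓ) := by gcongr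
        _ = 16 * k * ℓ := by ring
        _ ≤ d := hd3)
    (by
      rw [div_le_div_iff₀ hQ (by norm_num)]
      have e1 : (M : ℝ) ≤ 2 * d * (4 * r * k) * (q : ℝ) ^ (k - 1) := by
        rw [div_le_iff₀ hrk] at hd2
        rw [← div_le_iff₀ hQ]; exact hd2
      rw [hMR] at e1
      have e2 : (n : ℝ) * r * (8 * (8 * k)) ≤ r * (8 * k) * (d * (q : ℝ) ^ (k - 1)) := by
        calc (n : ℝ) * r * (8 * (8 * k)) = n * r * (64 * k) := by ring
          _ ≤ n * r * A := by gcongr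
          _ ≤ _ := by linarith
      have e3 : 8 * (n : ℝ) ≤ d * (q : ℝ) ^ (k - 1) := by
        have : (0 : ℝ) < r * (8 * k) := by positivity
        refine le_of_mul_le_mul_left ?_ this
        linarith
      linarith)
    (by exact_mod_cast ht1)
  have hbound := sizeRamsey_le k l n r hlk (by omega) (by
      have : (l : ℝ) ≤ n := by
        have : (l : ℝ) ≤ k := by exact_mod_cast (by omega : l ≤ k)
        nlinarith
      exact_mod_cast this) (host g) (fun e he => card_of_mem_host he)
    (host_mono_path hk hM1 r n t d (by omega) hg hnd (by
      have : (M : ℝ) / (2 * (q : ℝ) ^ (k - 1)) = D / 2 := by rw [hD, div_div, mul_comm]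
      rw [this]
      push_cast
      linarith) (by
      have : (r * w * 4 ^ k : ℝ) < M := by
        calc (r * w * 4 ^ k : ℝ) ≤ r * (2 * n) * 4 ^ k := by gcongr
          _ = (2 * 4 ^ k) * (r * n) := by ring
          _ < A * (r * n) := by gcongr
          _ = M := by rw [hMR]; ring
      exact_mod_cast this))
  calc (sizeRamsey k (Finset.Icc 1 n) (lPathEdges k l n) r : ℝ) ^ 2
      ≤ ((host g).card : ℝ) ^ 2 := by gcongr
    _ ≤ (∏ j ∈ range k, (2 * (M : ℝ) / (q : ℝ) ^ j)) ^ 2 := by gcongr; exact (card_host hg).2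
    _ = (4 * M * D) ^ k := prod_sq k M q hq0
    _ ≤ (4 * M * (2 ^ (k - 1) * X)) ^ k := by gcongr
    _ = _ := by rw [hMR, hX]; congr 1; ring

end LPath

/-- For all `k ≥ 3` and `1 ≤ l ≤ k-1` there is a constant `C > 0` such that for every `r ≥ 2`
and all sufficiently large `n` with `n ≡ l (mod k-l)`,
`R̂(P^{(k)}_{n,l}, r) ≤ C · r^k · (n log n)^{k/2}`. -/
theorem sizeRamsey_lPath (k l : ℕ) (hk : 3 ≤ k) (hl1 : 1 ≤ l) (hlk : l ≤ k - 1) :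
    ∃ C : ℝ, 0 < C ∧ ∀ r : ℕ, 2 ≤ r → ∃ N : ℕ, ∀ n : ℕ, N ≤ n → n % (k - l) = l % (k - l) →
      (sizeRamsey k (Finset.Icc 1 n) (lPathEdges k l n) r : ℝ)
        ≤ C * (r : ℝ) ^ k * ((n : ℝ) * Real.log n) ^ ((k : ℝ) / 2) := by
  set A : ℕ := 128 * 4 ^ k * k ^ 2 with hA
  have hk0 : (0 : ℝ) < k := by exact_mod_cast (by omega : 0 < k)
  have hA0 : (0 : ℝ) < A := by rw [hA]; positivity
  set c : ℝ := 4 * (A * (2 ^ (k - 1) * (128 * k ^ 2))) with hc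
  have hc0 : 0 < c := by positivity
  clear_value c
  refine ⟨c ^ ((k : ℝ) / 2), by positivity, fun r hr => ?_⟩
  refine ⟨⌈Real.exp (4 * k ^ 2 * A * r)⌉₊, fun n hn _ => ?_⟩
  have hn' : Real.exp (4 * k ^ 2 * A * r) ≤ n := Nat.ceil_le.1 hn
  have hn0 : (0 : ℝ) < n := (Real.exp_pos _).trans_le hn'
  have hlog : (4 * k ^ 2 * A * r : ℝ) ≤ Real.log n := (Real.le_log_iff_exp_le hn0).2 hn'
  have hlog0 : 0 ≤ Real.log n := le_trans (by positivity) hlog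
  have hsq := LPath.sizeRamsey_bound k l r n hk hlk hr A hA hlog
  rw [← hc] at hsq
  have hrhs : c ^ ((k : ℝ) / 2) * (r : ℝ) ^ k * ((n : ℝ) * Real.log n) ^ ((k : ℝ) / 2)
      = (c * (r : ℝ) ^ 2 * (n * Real.log n)) ^ ((k : ℝ) / 2) := by
    rw [Real.mul_rpow (x := c * (r : ℝ) ^ 2) (by positivity) (by positivity),
      Real.mul_rpow (x := c) hc0.le (by positivity)]
    congr 2
    rw [← Real.rpow_natCast, ← Real.rpow_natCast, ← Real.rpow_mul (by positivity)]
    congr 1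
    push_cast
    ring
  rw [hrhs]
  refine (sq_le_sq₀ (by positivity) (by positivity)).1 ?_
  refine hsq.trans (le_of_eq ?_)
  rw [← Real.rpow_natCast (_ ^ _) 2, ← Real.rpow_mul (by positivity), ← Real.rpow_natCast _ k]
  congr 1
  push_cast
  ring
end
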